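/- Let $n,m$ be positive integers, $1<\alpha<\infty$, $0<p\leqslant q<\infty$ with $q\geqslant 2$, and set $r_0=\sqrt{p/q}$. Let $Q(\mathbf{z},w)\in\mathbb{C}[z_1,\dots,z_n,w]$ be an $m$-homogeneous polynomial. Then $\left(\int_{\mathbb{T}}\int_{\mathbb{D}^n}|Q(r_0z_1,\dots,r_0z_n,r_0w)|^{q}\,dA_\alpha(\mathbf{z})\,dw\right)^{1/q}\leqslant\left(\int_{\mathbb{T}}\int_{\mathbb{D}^n}|Q(\mathbf{z},w)|^{p}\,dA_\alpha(\mathbf{z})\,dw\right)^{1/p}$; equivalently, since $Q$ is $m$-homogeneous, $\|Q\|_{A_\alpha^{q}(\mathbb{D}^n,\mathbf{z})\times H^{q}(\mathbb{T},w)}\leqslant (q/p)^{m/2}\,\|Q\|_{A_\alpha^{p}(\mathbb{D}^n,\mathbf{z})\times H^{p}(\mathbb{T},w)}$. -/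

import Mathlib

open MeasureTheory Metric

/-- The weighted Bergman measure `dA_α(z) = (α-1)(1-|z|²)^(α-2) dA(z)` on the unit disk,
where `dA = dx dy / π` is the normalized area measure. -/
noncomputable def bergmanMeasure (α : ℝ) : Measure ℂ :=
  ((volume : Measure ℂ).restrict (ball (0 : ℂ) 1)).withDensity
    fun z => ENNReal.ofReal ((α - 1) * (1 - ‖z‖ ^ 2) ^ (α - 2) / Real.pi)

/-- The product Bergman measure `dA_α(z₁) ⋯ dA_α(zₙ)` on the polydisc. -/
noncomputable def bergmanMeasurePi (n : ℕ) (α : ℝ) : Measure (Fin n → ℂ) :=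
  Measure.pi fun _ => bergmanMeasure α

/-!
The weighted disk satisfies the logarithmic Sobolev inequality
`Ent(U²) ≤ (α - 1)⁻¹ ∫ (1 - |z|²) |∇U|² dA_α` for real vector-valued polynomials `U` in the real
coordinates, by induction on the degree. If it failed in some degree, the deficit would have a
negative minimum on the unit sphere of `L²`. Perturbing a minimiser along the Jacobi operator
`LU = (1 - |z|²) ΔU - 2 (α - 1) z · ∇U`, which preserves the degree, and using the Bochner identity
for `∫ |LU|²` together with the inequality for `∇U`, which has lower degree, with respect to
`dA_{α+1} ∝ (1 - |z|²) dA_α`, gives two logarithmic bounds that contradict the integration by parts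
formula for `∫ (1 - |z|²)² Δ|U|² dA_α`.

For holomorphic `f`, applying the inequality to powers of `|f|² + ε` and integrating by parts bounds
the entropy of these powers by the Euler derivative of `f`. Entropy tensorises, and the Euler
derivatives of an `m`-homogeneous polynomial add up to `m` times the polynomial, so Gross's
argument yields hypercontractivity on products of disks with arbitrary weights. Since `dA_β`
converges to arc length on the circle as `β → 1⁺`, one of the disks may be replaced by the circle.
-/

section CompactlyCarried

/-- A measure vanishing outside a compact set: its integrals of continuous functions converge and
may be differentiated under the integral sign without further estimates. -/
class IsCompactlyCarried {X : Type*} [TopologicalSpace X] [MeasurableSpace X] (μ : Measure X) :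
    Prop where
  exists_restrict_eq : ∃ k, IsCompact k ∧ μ.restrict k = μ

namespace IsCompactlyCarried

variable {X : Type*} [TopologicalSpace X] [MeasurableSpace X]

instance prod {Y : Type*} [TopologicalSpace Y] [MeasurableSpace Y] {μ : Measure X}
    {ν : Measure Y} [SFinite μ] [SFinite ν] [IsCompactlyCarried μ]
    [IsCompactlyCarried ν] : IsCompactlyCarried (μ.prod ν) := by
  obtain ⟨k, hk, hμ⟩ := exists_restrict_eq (μ := μ)
  obtain ⟨l, hl, hν⟩ := exists_restrict_eq (μ := ν)
  exact ⟨k ×ˢ l, hk.prod hl, by rw [← Measure.prod_restrict, hμ, hν]⟩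

instance pi {ι : Type*} [Fintype ι] {μ : ι → Measure X} [∀ i, SigmaFinite (μ i)]
    [∀ i, IsCompactlyCarried (μ i)] : IsCompactlyCarried (Measure.pi μ) := by
  choose k hk hμ using fun i => exists_restrict_eq (μ := μ i)
  exact ⟨Set.univ.pi k, isCompact_univ_pi hk, by simp_rw [Measure.restrict_pi_pi, hμ]⟩

variable [T2Space X] [OpensMeasurableSpace X] {μ : Measure X} [IsFiniteMeasure μ]
  [IsCompactlyCarried μ]

lemma integrable {f : X → ℝ} (hf : Continuous f) : Integrable f μ := by
  obtain ⟨k, hk, hμ⟩ := exists_restrict_eq (μ := μ)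
  rw [← hμ]
  exact hf.continuousOn.integrableOn_compact hk

lemma continuous_integral {Y : Type*} [TopologicalSpace Y] {f : Y → X → ℝ}
    (hf : Continuous (Function.uncurry f)) : Continuous fun y => ∫ x, f y x ∂μ := by
  obtain ⟨k, hk, hμ⟩ := exists_restrict_eq (μ := μ)
  have hint (y : Y) : Integrable (f y) μ := integrable (by fun_prop)
  refine continuous_iff_continuousAt.2 fun y₀ => Metric.tendsto_nhds.2 fun δ hδ => ?_
  set η := δ / (μ.real Set.univ + 1)
  obtain ⟨v, hv, hvη⟩ := hk.mem_uniformity_of_prod hf.continuousOn (Set.mem_univ y₀)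
    (Metric.dist_mem_uniformity (by positivity : 0 < η))
  filter_upwards [nhdsWithin_univ y₀ ▸ hv] with y hy
  have hclose : ∀ᵐ x ∂μ, ‖f y x - f y₀ x‖ ≤ η := by
    rw [← hμ]
    filter_upwards [ae_restrict_mem hk.measurableSet] with x hx using (hvη y hy x hx).le
  calc dist (∫ x, f y x ∂μ) (∫ x, f y₀ x ∂μ)
      = ‖∫ x, (f y x - f y₀ x) ∂μ‖ := by rw [dist_eq_norm, integral_sub (hint y) (hint y₀)]
    _ ≤ η * μ.real Set.univ := norm_integral_le_of_norm_le_const hclose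
    _ < η * (μ.real Set.univ + 1) := by gcongr; exact lt_add_one _
    _ = δ := div_mul_cancel₀ _ (by positivity)

lemma hasDerivAt_integral {f f' : ℝ → X → ℝ} (hf : ∀ t, Continuous (f t))
    (hf' : Continuous (Function.uncurry f')) (hd : ∀ t x, HasDerivAt (f · x) (f' t x) t) (t : ℝ) :
    HasDerivAt (fun t => ∫ x, f t x ∂μ) (∫ x, f' t x ∂μ) t := by
  obtain ⟨k, hk, hμ⟩ := exists_restrict_eq (μ := μ)
  obtain ⟨M, hM⟩ := ((isCompact_closedBall t 1).prod hk).bddAbove_image hf'.norm.continuousOn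
  have hbound : ∀ᵐ x ∂μ, ∀ s ∈ closedBall t 1, ‖f' s x‖ ≤ M := by
    rw [← hμ]
    filter_upwards [ae_restrict_mem hk.measurableSet] with x hx s hs
    exact hM ⟨(s, x), ⟨hs, hx⟩, rfl⟩
  exact (hasDerivAt_integral_of_dominated_loc_of_deriv_le (closedBall_mem_nhds t one_pos)
    (.of_forall fun s => (hf s).aestronglyMeasurable) (integrable (hf t))
    (by fun_prop : Continuous (f' t)).aestronglyMeasurable hbound (integrable_const M)
    (.of_forall fun x s _ => hd s x)).2

end IsCompactlyCarried

end CompactlyCarried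

section BergmanMeasure

variable {α : ℝ}

/-- The density of `dA_α` with respect to Lebesgue measure on the unit disk. -/
noncomputable def bergmanDensity (α : ℝ) (z : ℂ) : ℝ :=
  (α - 1) * (1 - ‖z‖ ^ 2) ^ (α - 2) / Real.pi

lemma bergmanMeasure_eq_withDensity (α : ℝ) :
    bergmanMeasure α = (volume.restrict (ball (0 : ℂ) 1)).withDensity
      fun z => ENNReal.ofReal (bergmanDensity α z) :=
  rfl

lemma one_sub_norm_sq_pos {z : ℂ} (hz : z ∈ ball (0 : ℂ) 1) : 0 < 1 - ‖z‖ ^ 2 := by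
  rw [mem_ball_zero_iff] at hz
  nlinarith [norm_nonneg z]

lemma bergmanDensity_pos (hα : 1 < α) {z : ℂ} (hz : z ∈ ball (0 : ℂ) 1) :
    0 < bergmanDensity α z := by
  have := Real.rpow_pos_of_pos (one_sub_norm_sq_pos hz) (α - 2)
  have : 0 < α - 1 := by linarith
  unfold bergmanDensity
  positivity

lemma measurable_bergmanDensity (α : ℝ) : Measurable (bergmanDensity α) := by
  unfold bergmanDensity
  fun_prop

lemma toReal_ofReal_bergmanDensity_ae (hα : 1 < α) :
    (fun z => (ENNReal.ofReal (bergmanDensity α z)).toReal)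
      =ᵐ[volume.restrict (ball (0 : ℂ) 1)] bergmanDensity α := by
  filter_upwards [ae_restrict_mem measurableSet_ball] with z hz
  rw [ENNReal.toReal_ofReal (bergmanDensity_pos hα hz).le]

lemma integral_bergmanMeasure (hα : 1 < α) (h : ℂ → ℝ) :
    ∫ z, h z ∂bergmanMeasure α = ∫ z in ball (0 : ℂ) 1, bergmanDensity α z * h z := by
  rw [bergmanMeasure_eq_withDensity, integral_withDensity_eq_integral_toReal_smul
    (measurable_bergmanDensity α).ennreal_ofReal (by simp)]
  refine integral_congr_ae ?_
  filter_upwards [toReal_ofReal_bergmanDensity_ae hα] with z hz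
  simp_rw [hz, smul_eq_mul]

lemma integrable_bergmanMeasure_iff (hα : 1 < α) {h : ℂ → ℝ} :
    Integrable h (bergmanMeasure α) ↔
      IntegrableOn (fun z => bergmanDensity α z * h z) (ball (0 : ℂ) 1) := by
  rw [bergmanMeasure_eq_withDensity, integrable_withDensity_iff_integrable_smul'
    (measurable_bergmanDensity α).ennreal_ofReal (by simp)]
  refine integrable_congr ?_
  filter_upwards [toReal_ofReal_bergmanDensity_ae hα] with z hz
  simp_rw [hz, smul_eq_mul]

lemma hasDerivAt_sq_sub_sq_rpow {b x : ℝ} (hx : x ^ 2 < b ^ 2) (β : ℝ) :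
    HasDerivAt (fun x : ℝ => (b ^ 2 - x ^ 2) ^ β)
      (-(2 * β * x * (b ^ 2 - x ^ 2) ^ (β - 1))) x := by
  have h := ((hasDerivAt_pow 2 x).const_sub (b ^ 2)).rpow_const (p := β) (Or.inl (by linarith))
  refine h.congr_deriv ?_
  ring

lemma integrableOn_mul_one_sub_sq_rpow_and_integral_eq_one {β : ℝ} (hβ : 0 < β) :
    IntegrableOn (fun x : ℝ => 2 * β * x * (1 - x ^ 2) ^ (β - 1)) (Set.Ioc 0 1) ∧
      ∫ x in (0 : ℝ)..1, 2 * β * x * (1 - x ^ 2) ^ (β - 1) = 1 := by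
  have hcont : ContinuousOn (fun x : ℝ => -(1 - x ^ 2) ^ β) (Set.Icc 0 1) :=
    (Continuous.rpow_const (by fun_prop) fun _ => Or.inr hβ.le).neg.continuousOn
  have hderiv : ∀ x ∈ Set.Ioo (0 : ℝ) 1, HasDerivAt (fun x : ℝ => -(1 - x ^ 2) ^ β)
      (2 * β * x * (1 - x ^ 2) ^ (β - 1)) x := fun x hx => by
    have := (hasDerivAt_sq_sub_sq_rpow (b := 1) (x := x) (by nlinarith [hx.1, hx.2]) β).neg
    simpa [Pi.neg_def] using this
  have hint := intervalIntegral.integrableOn_deriv_of_nonneg hcont hderiv fun x hx => by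
    have := hx.1.le
    have : 0 ≤ 1 - x ^ 2 := by nlinarith [hx.1, hx.2]
    positivity
  refine ⟨hint, ?_⟩
  rw [intervalIntegral.integral_eq_sub_of_hasDerivAt_of_le zero_le_one hcont hderiv
    ((intervalIntegrable_iff_integrableOn_Ioc_of_le zero_le_one).2 hint)]
  simp [Real.zero_rpow hβ.ne']

lemma integrableOn_bergmanDensity_and_integral_eq_one (hα : 1 < α) :
    IntegrableOn (bergmanDensity α) (ball (0 : ℂ) 1) ∧
      ∫ z in ball (0 : ℂ) 1, bergmanDensity α z = 1 := by
  set f : ℝ → ℝ := (Set.Iio 1).indicator fun x => (α - 1) * (1 - x ^ 2) ^ (α - 2) / Real.pi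
    with hf
  have hradial : (ball (0 : ℂ) 1).indicator (bergmanDensity α) = fun z => f ‖z‖ := by
    ext z
    by_cases hz : ‖z‖ < 1 <;> simp [bergmanDensity, hf, hz]
  have hpolar : (fun y : ℝ => y ^ (Module.finrank ℝ ℂ - 1) • f y) = (Set.Iio 1).indicator
      fun x => (2 * Real.pi)⁻¹ * (2 * (α - 1) * x * (1 - x ^ 2) ^ (α - 1 - 1)) := by
    ext y
    by_cases hy : y < 1
    · simp only [hf, hy, Set.indicator_of_mem, Set.mem_Iio, Complex.finrank_real_complex,
        Nat.add_one_sub_one, pow_one, smul_eq_mul, show α - 1 - 1 = α - 2 by ring]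
      field_simp
    · simp [hf, hy]
  have hIoo : Set.Iio (1 : ℝ) ∩ Set.Ioi 0 = Set.Ioo 0 1 := by
    ext; simp [and_comm]
  obtain ⟨hint, hval⟩ := integrableOn_mul_one_sub_sq_rpow_and_integral_eq_one (sub_pos.2 hα)
  rw [← integrable_indicator_iff measurableSet_ball, ← integral_indicator measurableSet_ball,
    hradial]
  constructor
  · rw [integrable_fun_norm_addHaar, hpolar, IntegrableOn,
      integrable_indicator_iff measurableSet_Iio, IntegrableOn,
      Measure.restrict_restrict measurableSet_Iio, hIoo]
    exact (hint.mono_set Set.Ioo_subset_Ioc_self).const_mul _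
  · rw [integral_fun_norm_addHaar, hpolar, integral_indicator measurableSet_Iio,
      Measure.restrict_restrict measurableSet_Iio, hIoo, ← integral_Ioc_eq_integral_Ioo,
      ← intervalIntegral.integral_of_le zero_le_one, intervalIntegral.integral_const_mul, hval]
    simp [Measure.real, Complex.volume_ball]

lemma isProbabilityMeasure_bergmanMeasure (hα : 1 < α) :
    IsProbabilityMeasure (bergmanMeasure α) := by
  obtain ⟨hint, hval⟩ := integrableOn_bergmanDensity_and_integral_eq_one hα
  constructor
  rw [bergmanMeasure_eq_withDensity, withDensity_apply _ MeasurableSet.univ,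
    Measure.restrict_univ, ← ofReal_integral_eq_lintegral_ofReal hint
    ((ae_restrict_mem measurableSet_ball).mono fun z hz => (bergmanDensity_pos hα hz).le), hval,
    ENNReal.ofReal_one]

lemma bergmanMeasure_eq_zero (hα : α ≤ 1) : bergmanMeasure α = 0 := by
  refine (withDensity_congr_ae ?_).trans withDensity_zero
  filter_upwards [ae_restrict_mem measurableSet_ball] with z hz
  have := Real.rpow_nonneg (one_sub_norm_sq_pos hz).le (α - 2)
  exact ENNReal.ofReal_of_nonpos (div_nonpos_of_nonpos_of_nonneg
    (mul_nonpos_of_nonpos_of_nonneg (by linarith) this) Real.pi_pos.le)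

instance (α : ℝ) : IsFiniteMeasure (bergmanMeasure α) := by
  rcases le_or_gt α 1 with hα | hα
  · rw [bergmanMeasure_eq_zero hα]
    infer_instance
  · have := isProbabilityMeasure_bergmanMeasure hα
    infer_instance

lemma ae_mem_ball_bergmanMeasure (α : ℝ) : ∀ᵐ z ∂bergmanMeasure α, z ∈ ball (0 : ℂ) 1 :=
  (withDensity_absolutelyContinuous _ _).ae_le (ae_restrict_mem measurableSet_ball)

instance (α : ℝ) : IsCompactlyCarried (bergmanMeasure α) := by
  refine ⟨closedBall 0 1, isCompact_closedBall 0 1, Measure.restrict_eq_self_of_ae_mem ?_⟩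
  filter_upwards [ae_mem_ball_bergmanMeasure α] with z hz using ball_subset_closedBall hz

lemma integral_bergmanMeasure_succ (hα : 1 < α) (h : ℂ → ℝ) :
    ∫ z, h z ∂bergmanMeasure (α + 1)
      = α / (α - 1) * ∫ z, (1 - ‖z‖ ^ 2) * h z ∂bergmanMeasure α := by
  rw [integral_bergmanMeasure (by linarith), integral_bergmanMeasure hα, ← integral_const_mul]
  refine setIntegral_congr_fun measurableSet_ball fun z hz => ?_
  have : α - 1 ≠ 0 := by linarith
  simp only [bergmanDensity]
  rw [show α + 1 - 2 = α - 2 + 1 by ring, Real.rpow_add_one (one_sub_norm_sq_pos hz).ne']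
  field_simp
  ring

lemma measurePreserving_circle_mul_bergmanMeasure (α : ℝ) (c : Circle) :
    MeasurePreserving (fun z : ℂ => (c : ℂ) * z) (bergmanMeasure α) (bergmanMeasure α) := by
  have hball : (fun z : ℂ => (c : ℂ) * z) ⁻¹' ball 0 1 = ball 0 1 := by
    ext z
    simp [Circle.norm_coe]
  have hvol : MeasurePreserving (fun z : ℂ => (c : ℂ) * z) (volume.restrict (ball 0 1))
      (volume.restrict (ball 0 1)) := by
    have := (rotation c).measurePreserving.restrict_preimage (measurableSet_ball (x := 0) (ε := 1))
    rwa [show rotation c ⁻¹' ball 0 1 = ball 0 1 from hball] at this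
  refine ⟨by fun_prop, ?_⟩
  ext s hs
  rw [Measure.map_apply (by fun_prop) hs, bergmanMeasure_eq_withDensity,
    withDensity_apply _ hs,
    withDensity_apply _ (hs.preimage (by fun_prop)),
    ← hvol.setLIntegral_comp_preimage hs (measurable_bergmanDensity α).ennreal_ofReal]
  simp [bergmanDensity, Circle.norm_coe]

lemma integral_sq_sub_sq_rpow_by_parts {β b : ℝ} (hβ : 0 < β) (hb : 0 ≤ b) {g g' : ℝ → ℝ}
    (hg : ∀ x, HasDerivAt g (g' x) x)
    (hint : IntegrableOn (fun x => (b ^ 2 - x ^ 2) ^ (β - 1) *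
      ((b ^ 2 - x ^ 2) * g' x - 2 * β * (x * g x))) (Set.Ioo (-b) b)) :
    ∫ x in Set.Ioo (-b) b, (b ^ 2 - x ^ 2) ^ (β - 1) *
      ((b ^ 2 - x ^ 2) * g' x - 2 * β * (x * g x)) = 0 := by
  have hcont : Continuous fun x => (b ^ 2 - x ^ 2) ^ β * g x :=
    (Continuous.rpow_const (by fun_prop) fun _ => Or.inr hβ.le).mul
      (continuous_iff_continuousAt.2 fun x => (hg x).continuousAt)
  have hderiv : ∀ x ∈ Set.Ioo (-b) b, HasDerivAt (fun x => (b ^ 2 - x ^ 2) ^ β * g x)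
      ((b ^ 2 - x ^ 2) ^ (β - 1) * ((b ^ 2 - x ^ 2) * g' x - 2 * β * (x * g x))) x := by
    intro x hx
    have hx : x ^ 2 < b ^ 2 := sq_lt_sq' hx.1 hx.2
    refine ((hasDerivAt_sq_sub_sq_rpow hx β).mul (hg x)).congr_deriv ?_
    rw [← sub_add_cancel β 1, Real.rpow_add_one (sub_pos.2 hx).ne', sub_add_cancel]
    ring
  rw [← integral_Ioc_eq_integral_Ioo, ← intervalIntegral.integral_of_le (by linarith),
    intervalIntegral.integral_eq_sub_of_hasDerivAt_of_le (by linarith) hcont.continuousOn hderiv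
      ((intervalIntegrable_iff_integrableOn_Ioo_of_le (by linarith)).2 hint)]
  simp [Real.zero_rpow hβ.ne']

lemma mk_mem_ball_iff (x y : ℝ) :
    (⟨x, y⟩ : ℂ) ∈ ball (0 : ℂ) 1 ↔ x ∈ Set.Ioo (-√(1 - y ^ 2)) √(1 - y ^ 2) := by
  rw [mem_ball_zero_iff, ← sq_lt_one_iff₀ (norm_nonneg _), Complex.sq_norm, Complex.normSq_mk,
    Set.mem_Ioo, ← abs_lt, Real.lt_sqrt (abs_nonneg x), sq_abs, lt_sub_iff_add_lt, pow_two, pow_two]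

lemma ae_integrableOn_Ioo_and_integral_ball_eq {k : ℂ → ℝ} (hk : IntegrableOn k (ball 0 1)) :
    (∀ᵐ y : ℝ, IntegrableOn (fun x => k ⟨x, y⟩) (Set.Ioo (-√(1 - y ^ 2)) √(1 - y ^ 2))) ∧
      ∫ z in ball 0 1, k z = ∫ y, ∫ x in Set.Ioo (-√(1 - y ^ 2)) √(1 - y ^ 2), k ⟨x, y⟩ := by
  have e := Complex.volume_preserving_equiv_real_prod.symm
  have hemb := Complex.measurableEquivRealProd.symm.measurableEmbedding
  have hslice : ∀ y, (fun x => (ball 0 1).indicator k (Complex.measurableEquivRealProd.symm (x, y)))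
      = (Set.Ioo (-√(1 - y ^ 2)) √(1 - y ^ 2)).indicator fun x => k ⟨x, y⟩ := fun y => by
    ext x
    change (ball 0 1).indicator k ⟨x, y⟩ = _
    simp only [Set.indicator, mk_mem_ball_iff]
  have hint : Integrable (fun p => (ball 0 1).indicator k (Complex.measurableEquivRealProd.symm p))
      (volume.prod volume) :=
    (e.integrable_comp_emb hemb).2 ((integrable_indicator_iff measurableSet_ball).2 hk)
  constructor
  · filter_upwards [hint.prod_left_ae] with y hy
    rwa [hslice, integrable_indicator_iff measurableSet_Ioo] at hy
  · rw [← integral_indicator measurableSet_ball, ← e.integral_comp hemb, Measure.volume_eq_prod,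
      integral_prod_symm _ hint]
    simp_rw [hslice, integral_indicator measurableSet_Ioo]

lemma integral_by_parts_re (hα : 1 < α) {F F' : ℂ → ℝ} (hF : Continuous F) (hF' : Continuous F')
    (hd : ∀ z, HasLineDerivAt ℝ F (F' z) z 1) :
    ∫ z, ((1 - ‖z‖ ^ 2) * F' z - 2 * (α - 1) * (z.re * F z)) ∂bergmanMeasure α = 0 := by
  obtain ⟨hint, heq⟩ := ae_integrableOn_Ioo_and_integral_ball_eq
    ((integrable_bergmanMeasure_iff hα).1 (IsCompactlyCarried.integrable (μ := bergmanMeasure α)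
      (f := fun z => (1 - ‖z‖ ^ 2) * F' z - 2 * (α - 1) * (z.re * F z)) (by fun_prop)))
  rw [integral_bergmanMeasure hα, heq]
  refine integral_eq_zero_of_ae ?_
  filter_upwards [hint] with y hy
  set b := √(1 - y ^ 2)
  have hderiv : ∀ x : ℝ, HasDerivAt (fun x : ℝ => F ⟨x, y⟩) (F' ⟨x, y⟩) x := fun x => by
    have := HasDerivAt.comp_sub_const x x (by simpa [HasLineDerivAt] using hd ⟨x, y⟩)
    refine this.congr_of_eventuallyEq (.of_forall fun t => congr_arg F ?_)
    apply Complex.ext <;> simp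
  have hslice : ∀ x ∈ Set.Ioo (-b) b, bergmanDensity α ⟨x, y⟩ *
      ((1 - ‖(⟨x, y⟩ : ℂ)‖ ^ 2) * F' ⟨x, y⟩ - 2 * (α - 1) * (x * F ⟨x, y⟩))
        = (α - 1) / Real.pi * ((b ^ 2 - x ^ 2) ^ (α - 1 - 1) *
          ((b ^ 2 - x ^ 2) * F' ⟨x, y⟩ - 2 * (α - 1) * (x * F ⟨x, y⟩))) := fun x hx => by
    have hb : b ^ 2 = 1 - y ^ 2 :=
      Real.sq_sqrt (Real.sqrt_pos.1 (by linarith [hx.1.trans hx.2] : 0 < b)).le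
    rw [bergmanDensity, Complex.sq_norm, Complex.normSq_mk, hb,
      show 1 - y ^ 2 - x ^ 2 = 1 - (x * x + y * y) by ring, show α - 1 - 1 = α - 2 by ring]
    ring
  have hc : (α - 1) / Real.pi ≠ 0 := div_ne_zero (by linarith) Real.pi_ne_zero
  rw [Pi.zero_apply, setIntegral_congr_fun measurableSet_Ioo hslice, integral_const_mul,
    integral_sq_sub_sq_rpow_by_parts (sub_pos.2 hα) (Real.sqrt_nonneg _) hderiv, mul_zero]
  simpa only [IntegrableOn, integrable_const_mul_iff hc.isUnit] using
    hy.congr_fun hslice measurableSet_Ioo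

lemma integral_by_parts_im (hα : 1 < α) {F F' : ℂ → ℝ} (hF : Continuous F) (hF' : Continuous F')
    (hd : ∀ z, HasLineDerivAt ℝ F (F' z) z Complex.I) :
    ∫ z, ((1 - ‖z‖ ^ 2) * F' z - 2 * (α - 1) * (z.im * F z)) ∂bergmanMeasure α = 0 := by
  have hI := measurePreserving_circle_mul_bergmanMeasure α
    ⟨Complex.I, mem_sphere_zero_iff_norm.2 Complex.norm_I⟩
  rw [← hI.integral_comp (rotation _).toHomeomorph.measurableEmbedding]
  have := integral_by_parts_re hα (F := fun z => F (Complex.I * z))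
    (F' := fun z => F' (Complex.I * z)) (by fun_prop) (by fun_prop) fun z =>
      by simpa [HasLineDerivAt, mul_add, mul_comm] using hd (Complex.I * z)
  simpa using this

end BergmanMeasure

section PartialDerivatives

open MvPolynomial

lemma pderiv_pderiv_comm {σ R : Type*} [CommSemiring R] (i j : σ) (p : MvPolynomial σ R) :
    pderiv i (pderiv j p) = pderiv j (pderiv i p) := by
  classical
  ext m
  simp only [coeff_pderiv, Finsupp.add_apply, Finsupp.single_apply, add_right_comm m]
  split_ifs <;> simp_all [mul_assoc, mul_comm, mul_left_comm]

lemma totalDegree_pderiv_le {σ R : Type*} [CommSemiring R] (i : σ) (p : MvPolynomial σ R) :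
    (pderiv i p).totalDegree ≤ p.totalDegree - 1 := by
  classical
  refine Finset.sup_le fun m hm => ?_
  rw [mem_support_iff, coeff_pderiv] at hm
  have := le_totalDegree (mem_support_iff.2 (left_ne_zero_of_mul hm))
  rw [Finsupp.sum_add_index' (by simp) (by simp)] at this
  simp only [Finsupp.sum_single_index] at this
  omega

lemma totalDegree_pderiv_lt {σ R : Type*} [CommSemiring R] {i : σ} {p : MvPolynomial σ R}
    (h : pderiv i p ≠ 0) : (pderiv i p).totalDegree < p.totalDegree := by
  have hpos : p.totalDegree ≠ 0 := fun h0 => h <| by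
    rw [totalDegree_eq_zero_iff_eq_C.1 h0, pderiv_C]
  have := totalDegree_pderiv_le i p
  omega

lemma eq_C_of_pderiv_eq_zero {σ R : Type*} [CommSemiring R] [NoZeroDivisors R] [CharZero R]
    {p : MvPolynomial σ R} (h : ∀ i, pderiv i p = 0) : p = C (coeff 0 p) := by
  classical
  ext m
  rw [coeff_C]
  split_ifs with hm
  · rw [hm]
  · obtain ⟨i, hi⟩ := Finsupp.ne_iff.1 (Ne.symm hm)
    have hle : Finsupp.single i 1 ≤ m := Finsupp.single_le_iff.2 (Nat.one_le_iff_ne_zero.2 hi)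
    have := congrArg (coeff (m - Finsupp.single i 1)) (h i)
    rw [coeff_pderiv, tsub_add_cancel_of_le hle, coeff_zero] at this
    exact (mul_eq_zero.1 this).resolve_right (Nat.cast_add_one_ne_zero _)

end PartialDerivatives

section PlanePolynomials

open MvPolynomial

/-- Real polynomials on the plane, in the coordinates `X 0 = Re z` and `X 1 = Im z`. -/
abbrev PlanePoly := MvPolynomial (Fin 2) ℝ

/-- Evaluation of a plane polynomial at a complex number. -/
noncomputable def planeEval (z : ℂ) : PlanePoly →ₐ[ℝ] ℝ :=
  aeval ![z.re, z.im]

@[simp] lemma planeEval_X_zero (z : ℂ) : planeEval z (X 0) = z.re := by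
  simp [planeEval]

@[simp] lemma planeEval_X_one (z : ℂ) : planeEval z (X 1) = z.im := by
  simp [planeEval]

lemma planeEval_C (z : ℂ) (a : ℝ) : planeEval z (C a) = a :=
  aeval_C _ a

@[fun_prop] lemma continuous_planeEval (p : PlanePoly) : Continuous fun z => planeEval z p := by
  simp only [planeEval, aeval_eq_eval]
  refine (continuous_eval p).comp (continuous_pi fun i => ?_)
  fin_cases i
  exacts [Complex.continuous_re, Complex.continuous_im]

lemma hasLineDerivAt_planeEval (p : PlanePoly) (z : ℂ) (i : Fin 2) :
    HasLineDerivAt ℝ (fun z => planeEval z p) (planeEval z (pderiv i p)) z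
      (![1, Complex.I] i) := by
  induction p using MvPolynomial.induction_on with
  | C a => simpa [HasLineDerivAt] using hasDerivAt_const (0 : ℝ) a
  | add p q hp hq =>
    simp only [map_add]
    exact HasDerivAt.add hp hq
  | mul_X p j hp =>
    have hX : HasDerivAt (fun t : ℝ => planeEval (z + t • ![1, Complex.I] i) (X j))
        (planeEval z (pderiv i (X j))) 0 := by
      fin_cases i <;> fin_cases j
      · simpa [pderiv_X] using (hasDerivAt_id (0 : ℝ)).const_add z.re
      · simpa [pderiv_X] using hasDerivAt_const (0 : ℝ) z.im
      · simpa [pderiv_X] using hasDerivAt_const (0 : ℝ) z.re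
      · simpa [pderiv_X] using (hasDerivAt_id (0 : ℝ)).const_add z.im
    simp only [map_mul, pderiv_mul, map_add]
    refine (HasDerivAt.mul hp hX).congr_deriv ?_
    simp [add_comm]

lemma integral_by_parts {α : ℝ} (hα : 1 < α) {F F' : ℂ → ℝ} (hF : Continuous F)
    (hF' : Continuous F') {i : Fin 2}
    (hd : ∀ z, HasLineDerivAt ℝ F (F' z) z (![1, Complex.I] i)) :
    ∫ z, ((1 - ‖z‖ ^ 2) * F' z - 2 * (α - 1) * (planeEval z (X i) * F z)) ∂bergmanMeasure α
      = 0 := by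
  fin_cases i
  · simpa using integral_by_parts_re hα hF hF' hd
  · simpa using integral_by_parts_im hα hF hF' hd

/-- Integration of plane polynomials against `dA_α`, as a linear functional. -/
noncomputable def planeIntegral (α : ℝ) : PlanePoly →ₗ[ℝ] ℝ where
  toFun p := ∫ z, planeEval z p ∂bergmanMeasure α
  map_add' p q := by
    simp only [map_add]
    exact integral_add (IsCompactlyCarried.integrable (by fun_prop))
      (IsCompactlyCarried.integrable (by fun_prop))
  map_smul' a p := by
    simp only [map_smul, smul_eq_mul, RingHom.id_apply]
    exact integral_const_mul _ _

variable {α : ℝ}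

lemma planeIntegral_apply (α : ℝ) (p : PlanePoly) :
    planeIntegral α p = ∫ z, planeEval z p ∂bergmanMeasure α :=
  rfl

lemma planeIntegral_C_mul (a : ℝ) (p : PlanePoly) :
    planeIntegral α (C a * p) = a * planeIntegral α p := by
  rw [← smul_eq_C_mul, map_smul, smul_eq_mul]

lemma planeIntegral_nonneg {p : PlanePoly} (h : ∀ z ∈ ball (0 : ℂ) 1, 0 ≤ planeEval z p) :
    0 ≤ planeIntegral α p := by
  refine integral_nonneg_of_ae ?_
  filter_upwards [ae_mem_ball_bergmanMeasure α] with z hz using h z hz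

lemma planeIntegral_mono {p q : PlanePoly}
    (h : ∀ z ∈ ball (0 : ℂ) 1, planeEval z p ≤ planeEval z q) :
    planeIntegral α p ≤ planeIntegral α q := by
  rw [← sub_nonneg, ← map_sub]
  exact planeIntegral_nonneg fun z hz => by simpa using h z hz

lemma planeEval_eqOn_zero_of_planeIntegral_eq_zero (hα : 1 < α) {p : PlanePoly}
    (h : ∀ z ∈ ball (0 : ℂ) 1, 0 ≤ planeEval z p) (h0 : planeIntegral α p = 0) :
    Set.EqOn (fun z => planeEval z p) 0 (ball 0 1) := by
  have hint := (integrable_bergmanMeasure_iff hα).1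
    (IsCompactlyCarried.integrable (μ := bergmanMeasure α) (continuous_planeEval p))
  rw [planeIntegral_apply, integral_bergmanMeasure hα, setIntegral_eq_zero_iff_of_nonneg_ae
    ((ae_restrict_mem measurableSet_ball).mono fun z hz =>
      mul_nonneg (bergmanDensity_pos hα hz).le (h z hz)) hint] at h0
  refine Measure.eqOn_open_of_ae_eq (μ := volume) ?_ isOpen_ball (by fun_prop) continuousOn_const
  filter_upwards [h0, ae_restrict_mem measurableSet_ball] with z hz hball
  exact (mul_eq_zero.1 hz).resolve_left (bergmanDensity_pos hα hball).ne'

lemma eq_zero_of_planeIntegral_eq_zero (hα : 1 < α) {p : PlanePoly}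
    (h : ∀ z ∈ ball (0 : ℂ) 1, 0 ≤ planeEval z p) (h0 : planeIntegral α p = 0) : p = 0 := by
  refine MvPolynomial.funext_set (fun _ => Set.Ioo (-1 / 2 : ℝ) (1 / 2))
    (fun _ => Set.Ioo_infinite (by norm_num)) fun x hx => ?_
  have hball : (⟨x 0, x 1⟩ : ℂ) ∈ ball (0 : ℂ) 1 := by
    obtain ⟨h00, h01⟩ := hx 0 (Set.mem_univ _)
    obtain ⟨h10, h11⟩ := hx 1 (Set.mem_univ _)
    rw [mem_ball_zero_iff, ← sq_lt_one_iff₀ (norm_nonneg _), Complex.sq_norm, Complex.normSq_mk]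
    nlinarith
  have hx' : (![x 0, x 1] : Fin 2 → ℝ) = x := by
    ext i; fin_cases i <;> rfl
  simpa [planeEval, hx', aeval_eq_eval] using
    planeEval_eqOn_zero_of_planeIntegral_eq_zero hα h h0 hball

/-- The polynomial `1 - |z|²`, the quotient of the densities of `dA_{α+1}` and `dA_α` up to a
constant. -/
noncomputable def diskPoly : PlanePoly :=
  1 - X 0 ^ 2 - X 1 ^ 2

@[simp] lemma planeEval_diskPoly (z : ℂ) : planeEval z diskPoly = 1 - ‖z‖ ^ 2 := by
  simp only [diskPoly, map_sub, map_one, map_pow, planeEval_X_zero, planeEval_X_one,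
    Complex.sq_norm, Complex.normSq_apply]
  ring

lemma totalDegree_diskPoly_le : diskPoly.totalDegree ≤ 2 :=
  (totalDegree_sub _ _).trans (max_le
    ((totalDegree_sub _ _).trans (max_le (by simp) (totalDegree_X_pow _ _).le))
    (totalDegree_X_pow _ _).le)

lemma pderiv_diskPoly (i : Fin 2) : pderiv i diskPoly = -(C 2 * X i) := by
  fin_cases i <;> simp [diskPoly, pderiv_X, map_ofNat]

lemma planeIntegral_succ (hα : 1 < α) (p : PlanePoly) :
    planeIntegral (α + 1) p = α / (α - 1) * planeIntegral α (diskPoly * p) := by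
  simp only [planeIntegral_apply, integral_bergmanMeasure_succ hα, map_mul, planeEval_diskPoly]

lemma planeIntegral_by_parts (hα : 1 < α) (p : PlanePoly) (i : Fin 2) :
    planeIntegral α (diskPoly * pderiv i p - C (2 * (α - 1)) * (X i * p)) = 0 := by
  simp only [planeIntegral_apply α (_ - _), map_sub (planeEval _), map_mul, planeEval_diskPoly,
    planeEval_C]
  exact integral_by_parts hα (by fun_prop) (by fun_prop) fun z => hasLineDerivAt_planeEval p z i

lemma planeIntegral_div (hα : 1 < α) (p q : PlanePoly) :
    planeIntegral α (diskPoly * (pderiv 0 p + pderiv 1 q)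
      - C (2 * (α - 1)) * (X 0 * p + X 1 * q)) = 0 := by
  have h := congrArg₂ (· + ·) (planeIntegral_by_parts hα p 0) (planeIntegral_by_parts hα q 1)
  simp only [← map_add, add_zero] at h
  rw [← h]
  congr 1
  ring

/-- The Laplacian `Δu`. -/
noncomputable def planeLaplacian (u : PlanePoly) : PlanePoly :=
  pderiv 0 (pderiv 0 u) + pderiv 1 (pderiv 1 u)

/-- The carré du champ `∇u · ∇v`. -/
noncomputable def planeGrad (u v : PlanePoly) : PlanePoly :=
  pderiv 0 u * pderiv 0 v + pderiv 1 u * pderiv 1 v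

/-- The squared Hilbert–Schmidt norm `|∇²u|²` of the Hessian. -/
noncomputable def planeHess (u : PlanePoly) : PlanePoly :=
  planeGrad (pderiv 0 u) (pderiv 0 u) + planeGrad (pderiv 1 u) (pderiv 1 u)

/-- The Jacobi operator `Lu = (1 - |z|²) Δu - 2(α - 1) z · ∇u`, which is symmetric with respect to
`dA_α` and does not increase the degree. -/
noncomputable def jacobiOp (α : ℝ) (u : PlanePoly) : PlanePoly :=
  diskPoly * planeLaplacian u - C (2 * (α - 1)) * (X 0 * pderiv 0 u + X 1 * pderiv 1 u)

lemma planeIntegral_mul_jacobiOp (hα : 1 < α) (u v : PlanePoly) :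
    planeIntegral α (u * jacobiOp α v) = -planeIntegral α (diskPoly * planeGrad u v) := by
  rw [eq_neg_iff_add_eq_zero, ← map_add]
  refine Eq.trans (congrArg _ ?_) (planeIntegral_div hα (u * pderiv 0 v) (u * pderiv 1 v))
  simp only [jacobiOp, planeGrad, planeLaplacian, pderiv_mul]
  ring

lemma planeIntegral_bochner (hα : 1 < α) (u : PlanePoly) :
    α * planeIntegral α (jacobiOp α u ^ 2)
      = 2 * α * (α - 1) * planeIntegral α (diskPoly * planeGrad u u)
        + (α - 1) * planeIntegral α (diskPoly ^ 2 * planeHess u)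
        + planeIntegral α (diskPoly ^ 2 * planeLaplacian u ^ 2) := by
  rw [← sub_eq_zero]
  simp only [← planeIntegral_C_mul, ← map_add, ← map_sub]
  set u₀ := pderiv 0 u with hu₀
  set u₁ := pderiv 1 u with hu₁
  have h10 : pderiv 1 u₀ = pderiv 0 u₁ := pderiv_pderiv_comm _ _ _
  have h001 : pderiv 0 (pderiv 0 u₁) = pderiv 1 (pderiv 0 u₀) := by
    rw [← h10, pderiv_pderiv_comm]
  have h101 : pderiv 1 (pderiv 0 u₁) = pderiv 0 (pderiv 1 u₁) := pderiv_pderiv_comm _ _ _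
  -- Divergence of `α (Lu ∇u - (1 - |z|²) ∇|∇u|²/2) + (1 - |z|²) (∇|∇u|²/2 - Δu ∇u)`.
  rw [← planeIntegral_div hα
    (C α * (jacobiOp α u * u₀ - diskPoly * (u₀ * pderiv 0 u₀ + u₁ * pderiv 0 u₁))
      + diskPoly * (u₀ * pderiv 0 u₀ + u₁ * pderiv 0 u₁ - u₀ * planeLaplacian u))
    (C α * (jacobiOp α u * u₁ - diskPoly * (u₀ * pderiv 0 u₁ + u₁ * pderiv 1 u₁))
      + diskPoly * (u₀ * pderiv 0 u₁ + u₁ * pderiv 1 u₁ - u₁ * planeLaplacian u))]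
  congr 1
  have hX₁ : pderiv (R := ℝ) (0 : Fin 2) (X 1) = 0 := pderiv_X_of_ne (by decide)
  have hX₀ : pderiv (R := ℝ) (1 : Fin 2) (X 0) = 0 := pderiv_X_of_ne (by decide)
  simp only [jacobiOp, planeGrad, planeLaplacian, planeHess, pderiv_mul, map_sub, map_add,
    pderiv_C, pderiv_diskPoly, pderiv_X_self, ← hu₀, ← hu₁, h10, h001, h101, hX₀, hX₁]
  simp only [diskPoly, map_mul, map_sub, map_one, map_ofNat]
  ring

lemma planeIntegral_diskPoly_sq_mul_laplacian (hα : 1 < α) (u : PlanePoly) :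
    planeIntegral α (diskPoly ^ 2 * planeLaplacian u)
      = 4 * α * (α - 1) * planeIntegral α u - 4 * α ^ 2 * planeIntegral α (diskPoly * u) := by
  rw [← sub_eq_zero]
  simp only [← planeIntegral_C_mul, ← map_sub]
  have h := congrArg₂ (· + ·)
    (planeIntegral_div hα (diskPoly * pderiv 0 u) (diskPoly * pderiv 1 u))
    (congrArg (2 * α * ·) (planeIntegral_div hα (X 0 * u) (X 1 * u)))
  simp only [← planeIntegral_C_mul, ← map_add, mul_zero, add_zero] at h
  rw [← h]
  congr 1
  simp only [planeLaplacian, pderiv_mul, pderiv_diskPoly, pderiv_X_self]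
  simp only [diskPoly, map_mul, map_sub, map_pow, map_one, map_ofNat]
  ring

lemma totalDegree_jacobiOp_le (α : ℝ) (u : PlanePoly) :
    (jacobiOp α u).totalDegree ≤ u.totalDegree := by
  have htop (i : Fin 2) : (diskPoly * pderiv i (pderiv i u)).totalDegree ≤ u.totalDegree := by
    rcases eq_or_ne (pderiv i (pderiv i u)) 0 with h | h
    · simp [h]
    have h₁ := totalDegree_pderiv_lt h
    have h₂ : (pderiv i u).totalDegree < u.totalDegree :=
      totalDegree_pderiv_lt fun h0 => h (by rw [h0, map_zero])
    have := totalDegree_mul diskPoly (pderiv i (pderiv i u))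
    have := totalDegree_diskPoly_le
    omega
  have hdrift (i : Fin 2) : (X i * pderiv i u).totalDegree ≤ u.totalDegree := by
    rcases eq_or_ne (pderiv i u) 0 with h | h
    · simp [h]
    have := totalDegree_pderiv_lt h
    have := totalDegree_mul (X i) (pderiv i u)
    rw [totalDegree_X] at this
    omega
  rw [jacobiOp, planeLaplacian, mul_add, ← smul_eq_C_mul]
  exact (totalDegree_sub _ _).trans (max_le
    ((totalDegree_add _ _).trans (max_le (htop 0) (htop 1)))
    ((totalDegree_smul_le _ _).trans ((totalDegree_add _ _).trans (max_le (hdrift 0) (hdrift 1)))))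

end PlanePolynomials

section Entropy

variable {X : Type*} [MeasurableSpace X] {μ : Measure X}

/-- The entropy `Ent_μ(h) = ∫ h log h dμ - (∫ h dμ) log (∫ h dμ)`; the convention
`Real.log 0 = 0` agrees with `0 log 0 = 0`. -/
noncomputable def entropy (μ : Measure X) (h : X → ℝ) : ℝ :=
  ∫ x, h x * Real.log (h x) ∂μ - (∫ x, h x ∂μ) * Real.log (∫ x, h x ∂μ)

lemma entropy_const_mul {h : X → ℝ} (hint : Integrable h μ)
    (hlog : Integrable (fun x => h x * Real.log (h x)) μ) (c : ℝ) :
    entropy μ (fun x => c * h x) = c * entropy μ h := by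
  have hmul (x y : ℝ) :
      x * y * Real.log (x * y) = x * Real.log x * y + x * (y * Real.log y) := by
    have := Real.negMulLog_mul x y
    simp only [Real.negMulLog_eq_neg] at this
    linarith
  simp only [entropy, hmul, integral_const_mul]
  rw [integral_add (hint.const_mul _) (hlog.const_mul _), integral_const_mul, integral_const_mul]
  ring

lemma integral_pos_of_ae_pos [NeZero μ] {h : X → ℝ} (hint : Integrable h μ)
    (hpos : ∀ᵐ x ∂μ, 0 < h x) : 0 < ∫ x, h x ∂μ := by
  have hnonneg : 0 ≤ᵐ[μ] h := hpos.mono fun _ hx => hx.le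
  refine (integral_nonneg_of_ae hnonneg).lt_of_ne' fun h0 => NeZero.ne μ ?_
  rw [← ae_eq_bot, ← Filter.eventually_false_iff_eq_bot]
  filter_upwards [hpos, (integral_eq_zero_iff_of_nonneg_ae hnonneg hint).1 h0] with x hx hx0
  exact hx.ne' hx0

lemma mul_log_le_mul_log_add {x y : ℝ} (hx : 0 ≤ x) (hy : 0 < y) :
    x * Real.log y ≤ x * Real.log x + y - x := by
  rcases hx.eq_or_lt with rfl | hx
  · simp [hy.le]
  have h := mul_le_mul_of_nonneg_left (Real.log_le_sub_one_of_pos (div_pos hy hx)) hx.le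
  rw [Real.log_div hy.ne' hx.ne', mul_sub, mul_sub, mul_div_cancel₀ _ hx.ne'] at h
  linarith

lemma integral_mul_log_le_entropy_add {f g : X → ℝ} (hf : Integrable f μ) (hg : Integrable g μ)
    (hff : Integrable (fun x => f x * Real.log (f x)) μ)
    (hfg : Integrable (fun x => f x * Real.log (g x)) μ)
    (hf0 : 0 ≤ᵐ[μ] f) (hg0 : ∀ᵐ x ∂μ, 0 < g x) :
    ∫ x, f x * Real.log (g x) ∂μ
      ≤ entropy μ f + (∫ x, f x ∂μ) * Real.log (∫ x, g x ∂μ) := by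
  rcases eq_or_ne (∫ x, f x ∂μ) 0 with hF | hF
  · have hf' := (integral_eq_zero_iff_of_nonneg_ae hf0 hf).1 hF
    have hzero (k : X → ℝ) : ∫ x, f x * k x ∂μ = 0 :=
      integral_eq_zero_of_ae (hf'.mono fun x hx => by simp [hx])
    simp [entropy, hzero, hF]
  have : NeZero μ := ⟨by rintro rfl; simp at hF⟩
  have hF' := (integral_nonneg_of_ae hf0).lt_of_ne' hF
  have hG := integral_pos_of_ae_pos hg hg0
  set F := ∫ x, f x ∂μ
  set G := ∫ x, g x ∂μ
  have hθ : 0 < F / G := div_pos hF' hG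
  have hle : ∫ x, (f x * Real.log (g x) + Real.log (F / G) * f x) ∂μ
      ≤ ∫ x, (f x * Real.log (f x) + F / G * g x - f x) ∂μ := by
    refine integral_mono_ae (hfg.add (hf.const_mul _)) ((hff.add (hg.const_mul _)).sub hf) ?_
    filter_upwards [hf0, hg0] with x hfx hgx
    have := mul_log_le_mul_log_add hfx (mul_pos hθ hgx)
    rw [Real.log_mul hθ.ne' hgx.ne'] at this
    linarith
  rw [integral_add hfg (hf.const_mul _), integral_sub (by exact hff.add (hg.const_mul _)) hf,
    integral_add hff (hg.const_mul _), integral_const_mul, integral_const_mul,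
    Real.log_div hF hG.ne', div_mul_cancel₀ F hG.ne'] at hle
  rw [entropy]
  linarith

end Entropy

section MulLog

lemma continuous_mul_log_of_sq_le {Y : Type*} [TopologicalSpace Y] {a b w : Y → ℝ}
    (ha : Continuous a) (hb : Continuous b) (hw : Continuous w) (hw0 : ∀ y, 0 ≤ w y)
    (h : ∀ y, a y ^ 2 ≤ b y * w y) : Continuous fun y => a y * Real.log (w y) := by
  rw [continuous_iff_continuousAt]
  intro y
  rcases ne_or_eq (w y) 0 with hy | hy
  · exact ha.continuousAt.mul (hw.continuousAt.log hy)
  have hay : a y = 0 := pow_eq_zero_iff two_ne_zero |>.1 <|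
    ((h y).trans_eq (by rw [hy, mul_zero])).antisymm (sq_nonneg _)
  have hbound : Continuous fun y => √(b y) * (2 * |√(w y) * Real.log √(w y)|) :=
    hb.sqrt.mul (continuous_const.mul (Real.continuous_mul_log.comp hw.sqrt).abs)
  have hlim := hbound.tendsto y
  simp only [hy, Real.sqrt_zero, zero_mul, abs_zero, mul_zero] at hlim
  rw [ContinuousAt, hay, zero_mul]
  refine squeeze_zero_norm (fun x => ?_) hlim
  have hax : |a x| ≤ √(b x) * √(w x) := by
    rw [← Real.sqrt_mul' _ (hw0 x)]
    exact Real.abs_le_sqrt (h x)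
  calc ‖a x * Real.log (w x)‖ = |a x| * |Real.log (w x)| := by rw [Real.norm_eq_abs, abs_mul]
    _ ≤ √(b x) * √(w x) * |Real.log (w x)| := by gcongr
    _ = √(b x) * (2 * |√(w x) * Real.log √(w x)|) := by
      rw [Real.log_sqrt (hw0 x), abs_mul, abs_div, abs_of_nonneg (Real.sqrt_nonneg (w x)),
        abs_two]
      ring

lemma hasDerivAt_quadratic (a b c t : ℝ) :
    HasDerivAt (fun t => a + 2 * t * b + t ^ 2 * c) (2 * (b + t * c)) t := by
  refine (((((hasDerivAt_id t).const_mul 2).mul_const b).const_add a).add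
    (((hasDerivAt_id t).pow 2).mul_const c)).congr_deriv ?_
  simp only [id]
  ring

lemma hasDerivAt_mul_log_quadratic {a b c : ℝ} (h : b ^ 2 ≤ a * c) (t : ℝ) :
    HasDerivAt (fun t => (a + 2 * t * b + t ^ 2 * c) * Real.log (a + 2 * t * b + t ^ 2 * c))
      (2 * ((b + t * c) * Real.log (a + 2 * t * b + t ^ 2 * c)) + 2 * (b + t * c)) t := by
  have hq := hasDerivAt_quadratic a b c t
  rcases ne_or_eq (a + 2 * t * b + t ^ 2 * c) 0 with h0 | h0
  · refine (hq.mul (hq.log h0)).congr_deriv ?_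
    rw [mul_div_cancel₀ _ h0]
    ring
  -- At a zero `t` the quadratic is `c (τ - t)²`, so `q log q` is `τ - t` times a function
  -- vanishing at `t`.
  have hb : b + t * c = 0 := by
    refine pow_eq_zero_iff two_ne_zero |>.1 ((sq_nonneg _).antisymm' ?_)
    linear_combination h + c * h0
  rw [h0, hb, hasDerivAt_iff_tendsto_slope]
  have hcont : Continuous fun τ : ℝ => c * Real.log c * (τ - t) +
      2 * c * ((τ - t) * Real.log (τ - t)) :=
    (by fun_prop : Continuous fun τ : ℝ => c * Real.log c * (τ - t)).add
      (continuous_const.mul (Real.continuous_mul_log.comp (by fun_prop)))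
  refine ((hcont.tendsto' t _ (by simp)).mono_left nhdsWithin_le_nhds).congr' ?_
  filter_upwards [self_mem_nhdsWithin] with τ hτ
  have hτ' : τ - t ≠ 0 := sub_ne_zero.2 hτ
  have hqτ : a + 2 * τ * b + τ ^ 2 * c = c * (τ - t) ^ 2 := by
    linear_combination h0 + 2 * (τ - t) * hb
  simp only [slope_def_field, h0, hqτ, zero_mul, sub_zero]
  rcases eq_or_ne c 0 with rfl | hc
  · simp
  rw [Real.log_mul hc (pow_ne_zero 2 hτ'), Real.log_pow]
  field_simp
  push_cast
  ring

end MulLog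

section VectorPolynomials

open MvPolynomial

variable {ι : Type*}

/-- The gradient of a vector-valued plane polynomial, itself a vector-valued polynomial; thus
`vecGradient U ⬝ᵥ vecGradient V` is `∇U · ∇V`. -/
noncomputable def vecGradient : (ι → PlanePoly) →ₗ[ℝ] ι ⊕ ι → PlanePoly where
  toFun U := Sum.elim (fun i => pderiv 0 (U i)) (fun i => pderiv 1 (U i))
  map_add' U V := by ext1 (i | i) <;> simp
  map_smul' c U := by ext1 (i | i) <;> simp [Derivation.map_smul]

variable [Fintype ι]

lemma vecGradient_dotProduct (U V : ι → PlanePoly) :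
    vecGradient U ⬝ᵥ vecGradient V = ∑ i, planeGrad (U i) (V i) := by
  simp only [planeGrad, Finset.sum_add_distrib]
  exact sumElim_dotProduct_sumElim _ _ _ _

lemma vecGradient_vecGradient_dotProduct (U : ι → PlanePoly) :
    vecGradient (vecGradient U) ⬝ᵥ vecGradient (vecGradient U) = ∑ i, planeHess (U i) := by
  rw [vecGradient_dotProduct, Fintype.sum_sum_type, ← Finset.sum_add_distrib]
  rfl

lemma dotProduct_add_smul_self (U V : ι → PlanePoly) (t : ℝ) :
    (U + t • V) ⬝ᵥ (U + t • V) = U ⬝ᵥ U + (2 * t) • (U ⬝ᵥ V) + t ^ 2 • (V ⬝ᵥ V) := by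
  simp only [dotProduct_add, add_dotProduct, smul_dotProduct, dotProduct_smul, dotProduct_comm V U]
  module

lemma planeEval_dotProduct (z : ℂ) (U V : ι → PlanePoly) :
    planeEval z (U ⬝ᵥ V) = (planeEval z ∘ U) ⬝ᵥ (planeEval z ∘ V) :=
  (planeEval z : PlanePoly →+* ℝ).map_dotProduct U V

lemma planeEval_dotProduct_self_nonneg (z : ℂ) (U : ι → PlanePoly) :
    0 ≤ planeEval z (U ⬝ᵥ U) := by
  rw [planeEval_dotProduct]
  exact Finset.sum_nonneg fun i _ => mul_self_nonneg _

lemma sq_planeEval_dotProduct_le (z : ℂ) (U V : ι → PlanePoly) :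
    planeEval z (U ⬝ᵥ V) ^ 2 ≤ planeEval z (U ⬝ᵥ U) * planeEval z (V ⬝ᵥ V) := by
  simp only [planeEval_dotProduct]
  simp only [dotProduct, ← sq]
  exact Finset.sum_mul_sq_le_sq_mul_sq _ _ _

lemma pderiv_dotProduct (j : Fin 2) (U V : ι → PlanePoly) :
    pderiv j (U ⬝ᵥ V) = (fun i => pderiv j (U i)) ⬝ᵥ V + U ⬝ᵥ fun i => pderiv j (V i) := by
  simp only [dotProduct, map_sum, pderiv_mul, Finset.sum_add_distrib]

lemma pderiv_dotProduct_self (j : Fin 2) (U : ι → PlanePoly) :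
    pderiv j (U ⬝ᵥ U) = 2 * (U ⬝ᵥ fun i => pderiv j (U i)) := by
  rw [pderiv_dotProduct, dotProduct_comm, two_mul]

lemma planeLaplacian_dotProduct_self (U : ι → PlanePoly) :
    planeLaplacian (U ⬝ᵥ U)
      = 2 * (vecGradient U ⬝ᵥ vecGradient U + U ⬝ᵥ fun i => planeLaplacian (U i)) := by
  rw [vecGradient_dotProduct]
  simp only [planeLaplacian, planeGrad, dotProduct, map_sum, pderiv_mul, map_add, mul_add,
    Finset.mul_sum, ← Finset.sum_add_distrib]
  exact Finset.sum_congr rfl fun i _ => by ring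

variable {α : ℝ}

lemma dotProduct_self_eq_zero_of_planeIntegral_eq_zero (hα : 1 < α) {U : ι → PlanePoly}
    (h : planeIntegral α (U ⬝ᵥ U) = 0) : U = 0 := by
  have hUU := eq_zero_of_planeIntegral_eq_zero hα
    (fun z _ => planeEval_dotProduct_self_nonneg z U) h
  ext1 i
  refine MvPolynomial.funext fun x => ?_
  have hx : ∑ i, eval x (U i) * eval x (U i) = 0 := by
    simpa [dotProduct] using congrArg (eval x) hUU
  simpa using (Finset.sum_eq_zero_iff_of_nonneg fun i _ => mul_self_nonneg _).1 hx i
    (Finset.mem_univ i)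

lemma planeIntegral_dotProduct_self_pos (hα : 1 < α) {U : ι → PlanePoly} (hU : U ≠ 0) :
    0 < planeIntegral α (U ⬝ᵥ U) :=
  (planeIntegral_nonneg fun z _ => planeEval_dotProduct_self_nonneg z U).lt_of_ne'
    fun h => hU (dotProduct_self_eq_zero_of_planeIntegral_eq_zero hα h)

lemma planeIntegral_vecGradient_jacobiOp (hα : 1 < α) (U V : ι → PlanePoly) :
    planeIntegral α (diskPoly * (vecGradient U ⬝ᵥ vecGradient V))
      = -planeIntegral α (U ⬝ᵥ fun i => jacobiOp α (V i)) := by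
  rw [vecGradient_dotProduct]
  simp only [dotProduct, Finset.mul_sum, map_sum, planeIntegral_mul_jacobiOp hα,
    Finset.sum_neg_distrib, neg_neg]

lemma planeIntegral_bochner_vec (hα : 1 < α) (U : ι → PlanePoly) :
    α * planeIntegral α ((fun i => jacobiOp α (U i)) ⬝ᵥ fun i => jacobiOp α (U i))
      = 2 * α * (α - 1) * planeIntegral α (diskPoly * (vecGradient U ⬝ᵥ vecGradient U))
        + (α - 1) * planeIntegral α
          (diskPoly ^ 2 * (vecGradient (vecGradient U) ⬝ᵥ vecGradient (vecGradient U)))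
        + planeIntegral α (diskPoly ^ 2 *
          ((fun i => planeLaplacian (U i)) ⬝ᵥ fun i => planeLaplacian (U i))) := by
  rw [vecGradient_vecGradient_dotProduct, vecGradient_dotProduct]
  simp only [dotProduct, Finset.mul_sum, map_sum, ← sq, planeIntegral_bochner hα,
    Finset.sum_add_distrib]

lemma planeIntegral_diskPoly_sq_mul_dotProduct_self_nonneg (U : ι → PlanePoly) :
    0 ≤ planeIntegral α (diskPoly ^ 2 * (U ⬝ᵥ U)) :=
  planeIntegral_nonneg fun z _ => by
    rw [map_mul, map_pow]
    exact mul_nonneg (sq_nonneg _) (planeEval_dotProduct_self_nonneg z U)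

lemma sq_planeIntegral_diskPoly_sq_mul_dotProduct_le (U V : ι → PlanePoly) :
    planeIntegral α (diskPoly ^ 2 * (U ⬝ᵥ V)) ^ 2
      ≤ planeIntegral α (diskPoly ^ 2 * (U ⬝ᵥ U))
        * planeIntegral α (diskPoly ^ 2 * (V ⬝ᵥ V)) := by
  have hquad (t : ℝ) : 0 ≤ planeIntegral α (diskPoly ^ 2 * (V ⬝ᵥ V)) * (t * t)
      + 2 * planeIntegral α (diskPoly ^ 2 * (U ⬝ᵥ V)) * t
      + planeIntegral α (diskPoly ^ 2 * (U ⬝ᵥ U)) := by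
    have := planeIntegral_diskPoly_sq_mul_dotProduct_self_nonneg (α := α) (U + t • V)
    simp only [dotProduct_add_smul_self, mul_add, mul_smul_comm, map_add, map_smul,
      smul_eq_mul] at this
    linarith
  have := discrim_le_zero hquad
  rw [discrim] at this
  linarith

end VectorPolynomials

section Deficit

open MvPolynomial

variable {ι : Type*} [Fintype ι] {α : ℝ}

/-- The deficit in the logarithmic Sobolev inequality for `dA_α` and the vector-valued
polynomial `U`. -/
noncomputable def lsiDeficit (α : ℝ) (U : ι → PlanePoly) : ℝ :=
  (α - 1)⁻¹ * planeIntegral α (diskPoly * (vecGradient U ⬝ᵥ vecGradient U))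
    - entropy (bergmanMeasure α) fun z => planeEval z (U ⬝ᵥ U)

lemma continuous_planeEval_mul_log (p : PlanePoly) :
    Continuous fun z => planeEval z p * Real.log (planeEval z p) :=
  Real.continuous_mul_log.comp (continuous_planeEval p)

lemma lsiDeficit_smul (α : ℝ) (c : ℝ) (U : ι → PlanePoly) :
    lsiDeficit α (c • U) = c ^ 2 * lsiDeficit α U := by
  simp only [lsiDeficit, map_smul vecGradient, smul_dotProduct, dotProduct_smul, smul_smul,
    mul_smul_comm, map_smul, smul_eq_mul, ← sq]
  rw [entropy_const_mul (IsCompactlyCarried.integrable (by fun_prop))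
    (IsCompactlyCarried.integrable (continuous_planeEval_mul_log _))]
  ring

lemma lsiDeficit_eq_zero_of_vecGradient_eq_zero (hα : 1 < α) {U : ι → PlanePoly}
    (h : vecGradient U = 0) : lsiDeficit α U = 0 := by
  have := isProbabilityMeasure_bergmanMeasure hα
  have hconst (i : ι) : U i = C (coeff 0 (U i)) := eq_C_of_pderiv_eq_zero fun j => by
    fin_cases j
    exacts [congrFun h (Sum.inl i), congrFun h (Sum.inr i)]
  have hUU (z : ℂ) : planeEval z (U ⬝ᵥ U) = ∑ i, coeff 0 (U i) * coeff 0 (U i) := by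
    rw [planeEval_dotProduct, dotProduct]
    refine Finset.sum_congr rfl fun i _ => ?_
    rw [Function.comp_apply, hconst i, planeEval_C, coeff_C, if_pos rfl]
  simp [lsiDeficit, entropy, h, hUU]

lemma continuous_planeEval_linearMap {E : Type*} [NormedAddCommGroup E] [NormedSpace ℝ E]
    [FiniteDimensional ℝ E] (l : E →ₗ[ℝ] PlanePoly) :
    Continuous fun x : E × ℂ => planeEval x.2 (l x.1) := by
  let b := Module.finBasis ℝ E
  have hl (x : E × ℂ) : planeEval x.2 (l x.1) = ∑ j, b.coord j x.1 * planeEval x.2 (l (b j)) := by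
    conv_lhs => rw [← b.sum_repr x.1]
    simp only [map_sum, map_smul, smul_eq_mul, b.coord_apply]
  simp only [hl]
  have hcoord (j) : Continuous (b.coord j) := LinearMap.continuous_of_finiteDimensional _
  fun_prop

lemma continuous_planeEval_dotProduct_linearMap {E : Type*} [NormedAddCommGroup E]
    [NormedSpace ℝ E] [FiniteDimensional ℝ E] (l : E →ₗ[ℝ] ι → PlanePoly) :
    Continuous fun x : E × ℂ => planeEval x.2 (l x.1 ⬝ᵥ l x.1) := by
  simp only [dotProduct, map_sum, map_mul]
  exact continuous_finsetSum _ fun i _ =>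
    have hi := continuous_planeEval_linearMap (LinearMap.proj i ∘ₗ l)
    hi.mul hi

lemma continuous_planeIntegral_dotProduct_linearMap {E : Type*} [NormedAddCommGroup E]
    [NormedSpace ℝ E] [FiniteDimensional ℝ E] (l : E →ₗ[ℝ] ι → PlanePoly) :
    Continuous fun x => planeIntegral α (l x ⬝ᵥ l x) :=
  IsCompactlyCarried.continuous_integral (continuous_planeEval_dotProduct_linearMap l)

lemma continuous_lsiDeficit_linearMap {E : Type*} [NormedAddCommGroup E] [NormedSpace ℝ E]
    [FiniteDimensional ℝ E] (l : E →ₗ[ℝ] ι → PlanePoly) :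
    Continuous fun x => lsiDeficit α (l x) := by
  have hU := continuous_planeEval_dotProduct_linearMap l
  have hlog := Real.continuous_mul_log.comp hU
  have hgrad : Continuous fun x =>
      planeIntegral α (diskPoly * (vecGradient (l x) ⬝ᵥ vecGradient (l x))) := by
    refine IsCompactlyCarried.continuous_integral
      (f := fun x z => planeEval z (diskPoly * (vecGradient (l x) ⬝ᵥ vecGradient (l x)))) ?_
    simp only [Function.uncurry_def, map_mul]
    exact ((continuous_planeEval _).comp continuous_snd).mul
      (continuous_planeEval_dotProduct_linearMap (vecGradient ∘ₗ l))
  exact (continuous_const.mul hgrad).sub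
    ((IsCompactlyCarried.continuous_integral (f := fun x z => planeEval z (l x ⬝ᵥ l x) *
      Real.log (planeEval z (l x ⬝ᵥ l x))) hlog).sub
      (Real.continuous_mul_log.comp (continuous_planeIntegral_dotProduct_linearMap l)))

end Deficit

section Minimizer

lemma exists_min_of_homogeneous_two {E : Type*} [NormedAddCommGroup E] [NormedSpace ℝ E]
    [FiniteDimensional ℝ E] {F N : E → ℝ} (hF : Continuous F) (hN : Continuous N)
    (hFsmul : ∀ (c : ℝ) x, F (c • x) = c ^ 2 * F x)
    (hNsmul : ∀ (c : ℝ) x, N (c • x) = c ^ 2 * N x) (hNpos : ∀ x, x ≠ 0 → 0 < N x)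
    {w : E} (hw : F w < 0) :
    ∃ u, N u = 1 ∧ F u < 0 ∧ ∀ x, F u * N x ≤ F x := by
  have hF0 : F 0 = 0 := by simpa using hFsmul 0 0
  have hw0 : w ≠ 0 := by rintro rfl; exact hw.ne hF0
  have hsphere {x : E} (hx : x ≠ 0) : ‖x‖⁻¹ • x ∈ sphere (0 : E) 1 := by
    simp [norm_smul, inv_mul_cancel₀ (norm_ne_zero_iff.2 hx)]
  have hNsphere {x : E} (hx : x ∈ sphere (0 : E) 1) : 0 < N x :=
    hNpos x (ne_zero_of_mem_unit_sphere ⟨x, hx⟩)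
  obtain ⟨v, hv, hmin⟩ := (isCompact_sphere (0 : E) 1).exists_isMinOn ⟨_, hsphere hw0⟩
    (f := fun x => F x / N x)
    (hF.continuousOn.div hN.continuousOn fun x hx => (hNsphere hx).ne')
  have hle (x : E) : F v / N v * N x ≤ F x := by
    rcases eq_or_ne x 0 with rfl | hx
    · simp [hF0, show N 0 = 0 by simpa using hNsmul 0 0]
    have hmin' : F v / N v ≤ F (‖x‖⁻¹ • x) / N (‖x‖⁻¹ • x) := hmin (hsphere hx)
    rwa [hFsmul, hNsmul, mul_div_mul_left _ _ (by positivity), le_div_iff₀ (hNpos x hx)] at hmin'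
  have hc : 0 < N v := hNsphere hv
  have hFu : F ((√(N v))⁻¹ • v) = F v / N v := by
    rw [hFsmul, inv_pow, Real.sq_sqrt hc.le, div_eq_inv_mul]
  refine ⟨(√(N v))⁻¹ • v, ?_, ?_, fun x => hFu ▸ hle x⟩
  · rw [hNsmul, inv_pow, Real.sq_sqrt hc.le, inv_mul_cancel₀ hc.ne']
  · rw [hFu]
    exact (neg_iff_pos_of_mul_neg ((hle w).trans_lt hw)).2 (hNpos w hw0)

open MvPolynomial in
lemma exists_min_lsiDeficit {ι : Type*} [Fintype ι] {α : ℝ} (hα : 1 < α) {d : ℕ}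
    {W : ι → PlanePoly} (hW : ∀ i, (W i).totalDegree ≤ d) (hneg : lsiDeficit α W < 0) :
    ∃ U : ι → PlanePoly, (∀ i, (U i).totalDegree ≤ d) ∧ planeIntegral α (U ⬝ᵥ U) = 1 ∧
      lsiDeficit α U < 0 ∧ ∀ V : ι → PlanePoly, (∀ i, (V i).totalDegree ≤ d) →
        lsiDeficit α U * planeIntegral α (V ⬝ᵥ V) ≤ lsiDeficit α V := by
  let b := Module.finBasis ℝ (ι → restrictTotalDegree (Fin 2) ℝ d)
  let l : (Fin _ → ℝ) →ₗ[ℝ] ι → PlanePoly :=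
    (LinearMap.pi fun i => Submodule.subtype _ ∘ₗ LinearMap.proj i) ∘ₗ b.equivFun.symm.toLinearMap
  have hl_deg (x i) : (l x i).totalDegree ≤ d :=
    (mem_restrictTotalDegree _ _ _).1 (b.equivFun.symm x i).2
  have hl_surj (V : ι → PlanePoly) (hV : ∀ i, (V i).totalDegree ≤ d) : ∃ x, l x = V := by
    refine ⟨b.equivFun fun i => ⟨V i, (mem_restrictTotalDegree _ _ _).2 (hV i)⟩, ?_⟩
    ext1 i
    simp [l]
  have hl_inj (x) (hx : x ≠ 0) : l x ≠ 0 := fun h => hx <| by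
    refine b.equivFun.symm.map_eq_zero_iff.1 (funext fun i => Subtype.ext ?_)
    exact congrFun h i
  obtain ⟨w, rfl⟩ := hl_surj W hW
  obtain ⟨u, hN, hF, hmin⟩ := exists_min_of_homogeneous_two (F := fun x => lsiDeficit α (l x))
    (N := fun x => planeIntegral α (l x ⬝ᵥ l x)) (continuous_lsiDeficit_linearMap l)
    (continuous_planeIntegral_dotProduct_linearMap l)
    (fun c x => by rw [map_smul, lsiDeficit_smul])
    (fun c x => by simp [smul_dotProduct, dotProduct_smul, sq, mul_assoc])
    (fun x hx => planeIntegral_dotProduct_self_pos hα (hl_inj x hx)) hneg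
  refine ⟨l u, hl_deg u, hN, hF, fun V hV => ?_⟩
  obtain ⟨v, rfl⟩ := hl_surj V hV
  exact hmin v

end Minimizer

section EulerLagrange

variable {ι : Type*} [Fintype ι] {α : ℝ}

lemma planeEval_add_smul_dotProduct_self (z : ℂ) (U V : ι → PlanePoly) (t : ℝ) :
    planeEval z ((U + t • V) ⬝ᵥ (U + t • V)) = planeEval z (U ⬝ᵥ U)
      + 2 * t * planeEval z (U ⬝ᵥ V) + t ^ 2 * planeEval z (V ⬝ᵥ V) := by
  simp only [dotProduct_add_smul_self, map_add, map_smul, smul_eq_mul]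

lemma planeIntegral_mul_add_smul_dotProduct_self (p : PlanePoly) (U V : ι → PlanePoly) (t : ℝ) :
    planeIntegral α (p * ((U + t • V) ⬝ᵥ (U + t • V))) = planeIntegral α (p * (U ⬝ᵥ U))
      + 2 * t * planeIntegral α (p * (U ⬝ᵥ V)) + t ^ 2 * planeIntegral α (p * (V ⬝ᵥ V)) := by
  simp only [dotProduct_add_smul_self, mul_add, mul_smul_comm, map_add, map_smul, smul_eq_mul]

lemma hasDerivAt_planeIntegral_mul_dotProduct_self (p : PlanePoly) (U V : ι → PlanePoly) :
    HasDerivAt (fun t : ℝ => planeIntegral α (p * ((U + t • V) ⬝ᵥ (U + t • V))))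
      (2 * planeIntegral α (p * (U ⬝ᵥ V))) 0 := by
  simp only [planeIntegral_mul_add_smul_dotProduct_self]
  simpa using hasDerivAt_quadratic _ (planeIntegral α (p * (U ⬝ᵥ V))) _ 0

lemma continuous_dotProduct_mul_log (U V : ι → PlanePoly) :
    Continuous fun z => planeEval z (U ⬝ᵥ V) * Real.log (planeEval z (U ⬝ᵥ U)) :=
  continuous_mul_log_of_sq_le (b := fun z => planeEval z (V ⬝ᵥ V)) (by fun_prop) (by fun_prop)
    (by fun_prop) (fun z => planeEval_dotProduct_self_nonneg z U) fun z => by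
      rw [mul_comm]
      exact sq_planeEval_dotProduct_le z U V

lemma hasDerivAt_integral_mul_log (U V : ι → PlanePoly) :
    HasDerivAt (fun t : ℝ => ∫ z, planeEval z ((U + t • V) ⬝ᵥ (U + t • V))
        * Real.log (planeEval z ((U + t • V) ⬝ᵥ (U + t • V))) ∂bergmanMeasure α)
      (2 * ∫ z, planeEval z (U ⬝ᵥ V) * Real.log (planeEval z (U ⬝ᵥ U)) ∂bergmanMeasure α
        + 2 * planeIntegral α (U ⬝ᵥ V)) 0 := by
  have hnonneg (t : ℝ) (z : ℂ) := planeEval_dotProduct_self_nonneg z (U + t • V)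
  simp only [planeEval_add_smul_dotProduct_self] at hnonneg ⊢
  have hcont : Continuous fun x : ℝ × ℂ =>
      (planeEval x.2 (U ⬝ᵥ V) + x.1 * planeEval x.2 (V ⬝ᵥ V)) *
        Real.log (planeEval x.2 (U ⬝ᵥ U) + 2 * x.1 * planeEval x.2 (U ⬝ᵥ V)
          + x.1 ^ 2 * planeEval x.2 (V ⬝ᵥ V)) := by
    refine continuous_mul_log_of_sq_le (b := fun x => planeEval x.2 (V ⬝ᵥ V)) (by fun_prop)
      (by fun_prop) (by fun_prop) (fun x => hnonneg x.1 x.2) fun x => ?_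
    linarith [sq_planeEval_dotProduct_le x.2 U V]
  have hcont' : Continuous fun x : ℝ × ℂ =>
      2 * ((planeEval x.2 (U ⬝ᵥ V) + x.1 * planeEval x.2 (V ⬝ᵥ V)) *
        Real.log (planeEval x.2 (U ⬝ᵥ U) + 2 * x.1 * planeEval x.2 (U ⬝ᵥ V)
          + x.1 ^ 2 * planeEval x.2 (V ⬝ᵥ V)))
        + 2 * (planeEval x.2 (U ⬝ᵥ V) + x.1 * planeEval x.2 (V ⬝ᵥ V)) :=
    (hcont.const_mul 2).add (by fun_prop)
  have hderiv := IsCompactlyCarried.hasDerivAt_integral (μ := bergmanMeasure α)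
    (f' := fun t z => 2 * ((planeEval z (U ⬝ᵥ V) + t * planeEval z (V ⬝ᵥ V)) *
      Real.log (planeEval z (U ⬝ᵥ U) + 2 * t * planeEval z (U ⬝ᵥ V)
        + t ^ 2 * planeEval z (V ⬝ᵥ V))) + 2 * (planeEval z (U ⬝ᵥ V) + t * planeEval z (V ⬝ᵥ V)))
    (fun t => Real.continuous_mul_log.comp (by fun_prop)) hcont'
    (fun t z => hasDerivAt_mul_log_quadratic (sq_planeEval_dotProduct_le z U V) t) 0
  refine hderiv.congr_deriv ?_
  simp only [zero_mul, mul_zero, add_zero, ne_eq, OfNat.ofNat_ne_zero, not_false_eq_true, zero_pow]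
  rw [integral_add, integral_const_mul, integral_const_mul, planeIntegral_apply]
  · exact (IsCompactlyCarried.integrable (continuous_dotProduct_mul_log U V)).const_mul 2
  · exact IsCompactlyCarried.integrable (by fun_prop)

lemma hasDerivAt_lsiDeficit {U : ι → PlanePoly} (V : ι → PlanePoly)
    (hU : planeIntegral α (U ⬝ᵥ U) = 1) :
    HasDerivAt (fun t : ℝ => lsiDeficit α (U + t • V))
      (2 * ((α - 1)⁻¹ * planeIntegral α (diskPoly * (vecGradient U ⬝ᵥ vecGradient V))
        - ∫ z, planeEval z (U ⬝ᵥ V) * Real.log (planeEval z (U ⬝ᵥ U)) ∂bergmanMeasure α)) 0 := by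
  have hgrad := hasDerivAt_planeIntegral_mul_dotProduct_self (α := α) diskPoly (vecGradient U)
    (vecGradient V)
  have hM := hasDerivAt_planeIntegral_mul_dotProduct_self (α := α) 1 U V
  simp only [one_mul] at hM
  have hMlog := hM.mul (hM.log (by simp [hU]))
  have hderiv := (hgrad.const_mul (α - 1)⁻¹).sub
    ((hasDerivAt_integral_mul_log (α := α) U V).sub hMlog)
  refine (hderiv.congr_of_eventuallyEq (.of_forall fun t => ?_)).congr_deriv ?_
  · simp only [lsiDeficit, entropy, map_add, map_smul, Pi.sub_apply, Pi.mul_apply,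
      planeIntegral_apply α (_ ⬝ᵥ _)]
  · simp only [zero_smul, add_zero, hU, Real.log_one]
    ring

lemma euler_lagrange_of_forall_le {U V : ι → PlanePoly} (hU : planeIntegral α (U ⬝ᵥ U) = 1)
    (hmin : ∀ t : ℝ, lsiDeficit α U * planeIntegral α ((U + t • V) ⬝ᵥ (U + t • V))
      ≤ lsiDeficit α (U + t • V)) :
    (α - 1)⁻¹ * planeIntegral α (diskPoly * (vecGradient U ⬝ᵥ vecGradient V))
      = ∫ z, planeEval z (U ⬝ᵥ V) * Real.log (planeEval z (U ⬝ᵥ U)) ∂bergmanMeasure α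
        + lsiDeficit α U * planeIntegral α (U ⬝ᵥ V) := by
  have hM := hasDerivAt_planeIntegral_mul_dotProduct_self (α := α) 1 U V
  simp only [one_mul] at hM
  have hderiv := (hasDerivAt_lsiDeficit V hU).sub (hM.const_mul (lsiDeficit α U))
  have hlocal : IsLocalMin (fun t : ℝ => lsiDeficit α (U + t • V)
      - lsiDeficit α U * planeIntegral α ((U + t • V) ⬝ᵥ (U + t • V))) 0 :=
    Filter.Eventually.of_forall fun t => by simpa [hU] using hmin t
  linarith [hlocal.hasDerivAt_eq_zero hderiv]

lemma integral_jacobiOp_sq_of_forall_le (hα : 1 < α) {U : ι → PlanePoly}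
    (hU : planeIntegral α (U ⬝ᵥ U) = 1)
    (hmin : ∀ t : ℝ, lsiDeficit α U * planeIntegral α ((U + t • fun i => jacobiOp α (U i)) ⬝ᵥ
      (U + t • fun i => jacobiOp α (U i))) ≤ lsiDeficit α (U + t • fun i => jacobiOp α (U i))) :
    (α - 1)⁻¹ * planeIntegral α ((fun i => jacobiOp α (U i)) ⬝ᵥ fun i => jacobiOp α (U i))
      = -∫ z, planeEval z (U ⬝ᵥ fun i => jacobiOp α (U i)) * Real.log (planeEval z (U ⬝ᵥ U))
          ∂bergmanMeasure α
        + lsiDeficit α U * planeIntegral α (diskPoly * (vecGradient U ⬝ᵥ vecGradient U)) := by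
  have hEL := euler_lagrange_of_forall_le hU hmin
  have hUU := planeIntegral_vecGradient_jacobiOp hα U U
  have hUL := planeIntegral_vecGradient_jacobiOp hα (fun i => jacobiOp α (U i)) U
  rw [dotProduct_comm (vecGradient _)] at hUL
  rw [hUL] at hEL
  rw [hUU]
  linarith

end EulerLagrange

section IntegrationByPartsLog

open MvPolynomial

variable {α : ℝ}

lemma integral_pderiv_mul_log (hα : 1 < α) {s : PlanePoly} (hs : ∀ z, 0 ≤ planeEval z s) {ε : ℝ}
    (hε : 0 < ε) (p : PlanePoly) (i : Fin 2) :
    ∫ z, planeEval z (diskPoly * pderiv i p - C (2 * (α - 1)) * (X i * p))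
        * Real.log (planeEval z s + ε) ∂bergmanMeasure α
      = -∫ z, planeEval z (diskPoly * (p * pderiv i s)) / (planeEval z s + ε)
        ∂bergmanMeasure α := by
  have hne (z : ℂ) : planeEval z s + ε ≠ 0 := (add_pos_of_nonneg_of_pos (hs z) hε).ne'
  have hd (z : ℂ) : HasLineDerivAt ℝ (fun z => planeEval z p * Real.log (planeEval z s + ε))
      (planeEval z (pderiv i p) * Real.log (planeEval z s + ε)
        + planeEval z p * (planeEval z (pderiv i s) / (planeEval z s + ε))) z
      (![1, Complex.I] i) := by
    have hlog := (HasDerivAt.add_const ε (hasLineDerivAt_planeEval s z i)).log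
      (by simpa using hne z)
    simpa using! HasDerivAt.mul (hasLineDerivAt_planeEval p z i) hlog
  have h := integral_by_parts hα (by fun_prop (disch := exact hne _))
    (by fun_prop (disch := exact hne _)) hd
  rw [eq_neg_iff_add_eq_zero, ← integral_add, ← h]
  · refine integral_congr_ae (Filter.Eventually.of_forall fun z => ?_)
    simp only [map_sub, map_mul, planeEval_diskPoly, planeEval_C]
    ring
  · exact IsCompactlyCarried.integrable (by fun_prop (disch := exact hne _))
  · exact IsCompactlyCarried.integrable (by fun_prop (disch := exact hne _))

end IntegrationByPartsLog

section LogBounds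

open MvPolynomial

variable {α : ℝ}

lemma dotProduct_jacobiOp_eq {ι : Type*} [Fintype ι] (U : ι → PlanePoly) :
    ∑ j, (diskPoly * pderiv j (U ⬝ᵥ fun i => pderiv j (U i))
        - C (2 * (α - 1)) * (X j * (U ⬝ᵥ fun i => pderiv j (U i))))
      = (U ⬝ᵥ fun i => jacobiOp α (U i)) + diskPoly * (vecGradient U ⬝ᵥ vecGradient U) := by
  rw [vecGradient_dotProduct]
  simp only [Fin.sum_univ_two, pderiv_dotProduct]
  simp only [dotProduct, jacobiOp, planeLaplacian, planeGrad, Finset.mul_sum,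
    ← Finset.sum_add_distrib, ← Finset.sum_sub_distrib]
  exact Finset.sum_congr rfl fun i _ => by ring

lemma sum_sq_planeEval_dotProduct_pderiv_le {ι : Type*} [Fintype ι] (z : ℂ) (U : ι → PlanePoly) :
    ∑ j, planeEval z (U ⬝ᵥ fun i => pderiv j (U i)) ^ 2
      ≤ planeEval z (U ⬝ᵥ U) * planeEval z (vecGradient U ⬝ᵥ vecGradient U) := by
  have hgrad : vecGradient U ⬝ᵥ vecGradient U
      = ∑ j, (fun i => pderiv j (U i)) ⬝ᵥ fun i => pderiv j (U i) := by
    rw [Fin.sum_univ_two]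
    exact sumElim_dotProduct_sumElim _ _ _ _
  rw [hgrad, map_sum, Finset.mul_sum]
  exact Finset.sum_le_sum fun j _ => sq_planeEval_dotProduct_le z U _

lemma neg_integral_jacobiOp_mul_log_add_le {ι : Type*} [Fintype ι] (hα : 1 < α)
    (U : ι → PlanePoly) {ε : ℝ} (hε : 0 < ε) :
    -∫ z, planeEval z (U ⬝ᵥ fun i => jacobiOp α (U i)) * Real.log (planeEval z (U ⬝ᵥ U) + ε)
        ∂bergmanMeasure α
      ≤ ∫ z, planeEval z (diskPoly * (vecGradient U ⬝ᵥ vecGradient U))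
          * Real.log (planeEval z (U ⬝ᵥ U) + ε) ∂bergmanMeasure α
        + 2 * planeIntegral α (diskPoly * (vecGradient U ⬝ᵥ vecGradient U)) := by
  have hs (z : ℂ) := planeEval_dotProduct_self_nonneg z U
  have hpos (z : ℂ) : 0 < planeEval z (U ⬝ᵥ U) + ε := add_pos_of_nonneg_of_pos (hs z) hε
  have hlog (p : PlanePoly) : Integrable
      (fun z => planeEval z p * Real.log (planeEval z (U ⬝ᵥ U) + ε)) (bergmanMeasure α) :=
    IsCompactlyCarried.integrable (by fun_prop (disch := exact fun z => (hpos z).ne'))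
  have hdiv (p : PlanePoly) : Integrable
      (fun z => planeEval z p / (planeEval z (U ⬝ᵥ U) + ε)) (bergmanMeasure α) :=
    IsCompactlyCarried.integrable (by fun_prop (disch := exact fun z => (hpos z).ne'))
  have hparts := Finset.sum_congr rfl fun (j : Fin 2) (_ : j ∈ Finset.univ) =>
    integral_pderiv_mul_log hα hs hε (U ⬝ᵥ fun i => pderiv j (U i)) j
  rw [← integral_finsetSum _ fun j _ => hlog _, Finset.sum_neg_distrib,
    ← integral_finsetSum _ fun j _ => hdiv _] at hparts
  simp only [← Finset.sum_mul, ← map_sum, dotProduct_jacobiOp_eq, pderiv_dotProduct_self,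
    map_add, add_mul] at hparts
  rw [integral_add (hlog _) (hlog _)] at hparts
  suffices ∫ z, ∑ j, planeEval z (diskPoly * ((U ⬝ᵥ fun i => pderiv j (U i))
      * (2 * (U ⬝ᵥ fun i => pderiv j (U i))))) / (planeEval z (U ⬝ᵥ U) + ε) ∂bergmanMeasure α
      ≤ 2 * planeIntegral α (diskPoly * (vecGradient U ⬝ᵥ vecGradient U)) by linarith
  rw [planeIntegral_apply, ← integral_const_mul]
  refine integral_mono_ae (integrable_finsetSum _ fun j _ => hdiv _)
    (IsCompactlyCarried.integrable (by fun_prop)) ?_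
  filter_upwards [ae_mem_ball_bergmanMeasure α] with z hz
  have hV := planeEval_dotProduct_self_nonneg z (vecGradient U)
  have hCS := (sum_sq_planeEval_dotProduct_pderiv_le z U).trans
    (mul_le_mul_of_nonneg_right (le_add_of_nonneg_right hε.le) hV)
  rw [← Finset.sum_div, div_le_iff₀ (hpos z)]
  have := mul_le_mul_of_nonneg_left hCS (one_sub_norm_sq_pos hz).le
  simp only [map_mul, map_ofNat, planeEval_diskPoly, Fin.sum_univ_two] at this ⊢
  linarith

lemma integral_planeEval_mul_log_add_le (hα : 1 < α) {p s : PlanePoly}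
    (hp : ∀ z ∈ ball (0 : ℂ) 1, 0 ≤ planeEval z p) (hs : ∀ z, 0 ≤ planeEval z s) {ε : ℝ}
    (hε : 0 < ε) :
    ∫ z, planeEval z p * Real.log (planeEval z s + ε) ∂bergmanMeasure α
      ≤ entropy (bergmanMeasure α) (fun z => planeEval z p)
        + planeIntegral α p * Real.log (planeIntegral α s + ε) := by
  have := isProbabilityMeasure_bergmanMeasure hα
  have hpos (z : ℂ) : 0 < planeEval z s + ε := add_pos_of_nonneg_of_pos (hs z) hε
  refine (integral_mul_log_le_entropy_add (IsCompactlyCarried.integrable (by fun_prop))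
    (IsCompactlyCarried.integrable (by fun_prop))
    (IsCompactlyCarried.integrable (continuous_planeEval_mul_log p))
    (IsCompactlyCarried.integrable (by fun_prop (disch := exact fun z => (hpos z).ne')))
    ((ae_mem_ball_bergmanMeasure α).mono hp) (.of_forall hpos)).trans_eq ?_
  rw [integral_add (IsCompactlyCarried.integrable (by fun_prop)) (integrable_const ε)]
  simp [planeIntegral_apply]

lemma integral_diskPoly_mul_log_add_le (hα : 1 < α) {p s : PlanePoly}
    (hp : ∀ z ∈ ball (0 : ℂ) 1, 0 ≤ planeEval z p) (hs : ∀ z, 0 ≤ planeEval z s) {ε : ℝ}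
    (hε : 0 < ε) :
    ∫ z, planeEval z (diskPoly * p) * Real.log (planeEval z s + ε) ∂bergmanMeasure α
      ≤ (α - 1) / α * entropy (bergmanMeasure (α + 1)) (fun z => planeEval z p)
        + planeIntegral α (diskPoly * p) * Real.log (planeIntegral (α + 1) s + ε) := by
  have hα₁ : 0 < α - 1 := sub_pos.2 hα
  have hα₀ : 0 < α := by linarith
  have hsucc (x : ℝ) : (α - 1) / α * (α / (α - 1) * x) = x := by field_simp
  have h := mul_le_mul_of_nonneg_left
    (integral_planeEval_mul_log_add_le (α := α + 1) (by linarith) hp hs hε)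
    (div_pos hα₁ hα₀).le
  rw [integral_bergmanMeasure_succ hα, hsucc, mul_add, ← mul_assoc, planeIntegral_succ hα p,
    hsucc] at h
  simpa only [map_mul, planeEval_diskPoly, mul_assoc] using h

lemma mul_log_mul_le {g v b : ℝ} (hg : 0 < g) (hv : 0 ≤ v) (hb : 0 < b) :
    g * v * Real.log (g * v)
      ≤ g * (v * Real.log v) + (Real.log b - 1) * (g * v) + b⁻¹ * (g ^ 2 * v) := by
  rcases hv.eq_or_lt with rfl | hv
  · simp
  have h := Real.log_le_sub_one_of_pos (div_pos hg hb)
  rw [Real.log_div hg.ne' hb.ne'] at h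
  rw [Real.log_mul hg.ne' hv.ne']
  have := mul_le_mul_of_nonneg_left h (mul_pos hg hv).le
  linear_combination this

lemma entropy_diskPoly_mul_le (hα : 1 < α) {p : PlanePoly}
    (hp : ∀ z ∈ ball (0 : ℂ) 1, 0 ≤ planeEval z p) (hN : 0 < planeIntegral α (diskPoly * p))
    (hT : 0 < planeIntegral α (diskPoly ^ 2 * p)) :
    entropy (bergmanMeasure α) (fun z => planeEval z (diskPoly * p))
      ≤ (α - 1) / α * entropy (bergmanMeasure (α + 1)) (fun z => planeEval z p)
        + planeIntegral α (diskPoly * p) * Real.log (α / (α - 1) *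
          (planeIntegral α (diskPoly ^ 2 * p) / planeIntegral α (diskPoly * p))) := by
  have hα₁ : 0 < α - 1 := sub_pos.2 hα
  have : 0 < α := by linarith
  have hsucc (x : ℝ) : (α - 1) / α * (α / (α - 1) * x) = x := by field_simp
  have hb := div_pos hT hN
  have := continuous_planeEval_mul_log p
  have hle : ∫ z, planeEval z (diskPoly * p) * Real.log (planeEval z (diskPoly * p))
        ∂bergmanMeasure α
      ≤ ∫ z, (1 - ‖z‖ ^ 2) * (planeEval z p * Real.log (planeEval z p)) ∂bergmanMeasure α
        + (Real.log (planeIntegral α (diskPoly ^ 2 * p) / planeIntegral α (diskPoly * p)) - 1)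
          * planeIntegral α (diskPoly * p)
        + (planeIntegral α (diskPoly ^ 2 * p) / planeIntegral α (diskPoly * p))⁻¹
          * planeIntegral α (diskPoly ^ 2 * p) := by
    rw [planeIntegral_apply _ (_ ^ 2 * _), planeIntegral_apply _ (_ * p), ← integral_const_mul,
      ← integral_const_mul, ← integral_add, ← integral_add]
    rotate_left
    iterate 4 exact IsCompactlyCarried.integrable (by fun_prop)
    refine integral_mono_ae
      (IsCompactlyCarried.integrable (continuous_planeEval_mul_log _))
      (IsCompactlyCarried.integrable (by fun_prop)) ?_
    filter_upwards [ae_mem_ball_bergmanMeasure α] with z hz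
    simpa only [map_mul, map_pow, planeEval_diskPoly, planeIntegral_apply] using
      mul_log_mul_le (one_sub_norm_sq_pos hz) (hp z hz) hb
  rw [inv_div, div_mul_cancel₀ _ hT.ne'] at hle
  rw [entropy, entropy, integral_bergmanMeasure_succ hα, ← planeIntegral_apply,
    ← planeIntegral_apply, planeIntegral_succ hα, mul_sub, hsucc, ← mul_assoc, hsucc,
    Real.log_mul (by positivity) hb.ne', Real.log_mul (by positivity) hN.ne']
  linarith

lemma continuous_integral_dotProduct_mul_log_add_abs {ι : Type*} [Fintype ι]
    (U V : ι → PlanePoly) :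
    Continuous fun ε : ℝ => ∫ z, planeEval z (U ⬝ᵥ V) * Real.log (planeEval z (U ⬝ᵥ U) + |ε|)
      ∂bergmanMeasure α := by
  refine IsCompactlyCarried.continuous_integral
    (f := fun (ε : ℝ) z => planeEval z (U ⬝ᵥ V) * Real.log (planeEval z (U ⬝ᵥ U) + |ε|))
    (continuous_mul_log_of_sq_le (b := fun x => planeEval x.2 (V ⬝ᵥ V)) (by fun_prop)
      (by fun_prop) (by fun_prop)
      (fun x => add_nonneg (planeEval_dotProduct_self_nonneg _ U) (abs_nonneg _)) fun x => ?_)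
  have hV := planeEval_dotProduct_self_nonneg x.2 V
  have := sq_planeEval_dotProduct_le x.2 U V
  have := mul_nonneg hV (abs_nonneg x.1)
  linarith

lemma neg_integral_jacobiOp_mul_log_le {ι : Type*} [Fintype ι] (hα : 1 < α) (U : ι → PlanePoly)
    {E c : ℝ} (hc : c ≠ 0)
    (h : ∀ ε > 0, ∫ z, planeEval z (diskPoly * (vecGradient U ⬝ᵥ vecGradient U))
          * Real.log (planeEval z (U ⬝ᵥ U) + ε) ∂bergmanMeasure α
      ≤ E + planeIntegral α (diskPoly * (vecGradient U ⬝ᵥ vecGradient U)) * Real.log (c + ε)) :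
    -∫ z, planeEval z (U ⬝ᵥ fun i => jacobiOp α (U i)) * Real.log (planeEval z (U ⬝ᵥ U))
        ∂bergmanMeasure α
      ≤ E + planeIntegral α (diskPoly * (vecGradient U ⬝ᵥ vecGradient U)) * (Real.log c + 2) := by
  have hleft := (continuous_integral_dotProduct_mul_log_add_abs (α := α) U
    fun i => jacobiOp α (U i)).neg.continuousWithinAt (s := Set.Ioi 0) (x := 0)
  have hright : ContinuousWithinAt (fun ε : ℝ => E + planeIntegral α (diskPoly *
      (vecGradient U ⬝ᵥ vecGradient U)) * (Real.log (c + ε) + 2)) (Set.Ioi 0) 0 := by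
    have : c + 0 ≠ 0 := by rwa [add_zero]
    fun_prop (disch := assumption)
  refine (le_of_tendsto_of_tendsto hleft hright ?_).trans' (by simp) |>.trans (by simp)
  filter_upwards [self_mem_nhdsWithin] with ε hε
  rw [Pi.neg_apply, abs_of_pos (Set.mem_Ioi.1 hε)]
  linarith [neg_integral_jacobiOp_mul_log_add_le hα U hε, h ε hε]

end LogBounds

section LogSobolev

open MvPolynomial

lemma mul_lt_eight_mul_of_lt_log {κ R σ : ℝ} (hκ : 0 < κ) (hR : 0 < R) (hσ : 0 ≤ σ)
    (hσκ : σ < Real.log κ) (hσR : σ < Real.log R) : κ * σ < 8 * R * (κ - 1) := by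
  have hκ₁ : 1 < κ := (Real.log_pos_iff hκ.le).1 (hσ.trans_lt hσκ)
  have hR₁ : 1 < R := (Real.log_pos_iff hR.le).1 (hσ.trans_lt hσR)
  rcases le_or_gt κ 8 with h8 | h8
  · have : κ * σ < κ * (κ - 1) :=
      mul_lt_mul_of_pos_left (hσκ.trans_le (Real.log_le_sub_one_of_pos hκ)) hκ
    nlinarith
  · have : κ * σ < κ * (R - 1) :=
      mul_lt_mul_of_pos_left (hσR.trans_le (Real.log_le_sub_one_of_pos hR)) hκ
    nlinarith

variable {ι : Type*} [Fintype ι] {α : ℝ}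

lemma planeIntegral_diskPoly_pow_mul_pos (hα : 1 < α) {U : ι → PlanePoly} (hU : U ≠ 0) (k : ℕ) :
    0 < planeIntegral α (diskPoly ^ k * (U ⬝ᵥ U)) := by
  have hnonneg : ∀ z ∈ ball (0 : ℂ) 1, 0 ≤ planeEval z (diskPoly ^ k * (U ⬝ᵥ U)) := fun z hz => by
    rw [map_mul, map_pow, planeEval_diskPoly]
    exact mul_nonneg (pow_nonneg (one_sub_norm_sq_pos hz).le k)
      (planeEval_dotProduct_self_nonneg z U)
  have hdisk : diskPoly ≠ 0 := fun h => by simpa [h] using planeEval_diskPoly 0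
  refine (planeIntegral_nonneg hnonneg).lt_of_ne' fun h => hU ?_
  have hUU := (mul_eq_zero.1 (eq_zero_of_planeIntegral_eq_zero hα hnonneg h)).resolve_left
    (pow_ne_zero k hdisk)
  exact dotProduct_self_eq_zero_of_planeIntegral_eq_zero hα (by rw [hUU, map_zero])

lemma mul_planeIntegral_diskPoly_sq_vecGradient_le (hα : 1 < α) {U : ι → PlanePoly}
    (hU : planeIntegral α (U ⬝ᵥ U) = 1) :
    8 * α ^ 2 * planeIntegral α (diskPoly ^ 2 * (vecGradient U ⬝ᵥ vecGradient U))
        * (planeIntegral (α + 1) (U ⬝ᵥ U) - 1)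
      ≤ planeIntegral (α + 1) (U ⬝ᵥ U) * planeIntegral α (diskPoly ^ 2 *
          ((fun i => planeLaplacian (U i)) ⬝ᵥ fun i => planeLaplacian (U i))) := by
  have hα₁ : 0 < α - 1 := sub_pos.2 hα
  have : 0 < α := by linarith
  have hcs := sq_planeIntegral_diskPoly_sq_mul_dotProduct_le (α := α) U
    fun i => planeLaplacian (U i)
  have hmono : planeIntegral α (diskPoly ^ 2 * (U ⬝ᵥ U))
      ≤ planeIntegral α (diskPoly * (U ⬝ᵥ U)) := planeIntegral_mono fun z hz => by
    have hg := one_sub_norm_sq_pos hz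
    simp only [map_mul, map_pow, planeEval_diskPoly]
    refine mul_le_mul_of_nonneg_right ?_ (planeEval_dotProduct_self_nonneg z U)
    exact pow_le_of_le_one hg.le (sub_le_self _ (sq_nonneg _)) two_ne_zero
  have hlap := planeIntegral_diskPoly_sq_mul_laplacian hα (U ⬝ᵥ U)
  rw [planeLaplacian_dotProduct_self, mul_left_comm, ← map_ofNat C 2, planeIntegral_C_mul,
    mul_add, map_add, hU] at hlap
  have hS := planeIntegral_diskPoly_sq_mul_dotProduct_self_nonneg (α := α)
    fun i => planeLaplacian (U i)
  rw [planeIntegral_succ hα]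
  set S := planeIntegral α (diskPoly ^ 2 * ((fun i => planeLaplacian (U i)) ⬝ᵥ _))
  set P := planeIntegral α (diskPoly ^ 2 * (U ⬝ᵥ _))
  set T := planeIntegral α (diskPoly ^ 2 * (vecGradient U ⬝ᵥ _))
  set K := planeIntegral α (diskPoly * (U ⬝ᵥ U))
  have hP : P = -(T + 2 * α * (α * K - (α - 1))) := by linarith
  have hKS : 8 * α * T * (α * K - (α - 1)) ≤ K * S :=
    calc 8 * α * T * (α * K - (α - 1)) ≤ P ^ 2 := by
          rw [hP]
          linarith [sq_nonneg (T - 2 * α * (α * K - (α - 1)))]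
      _ ≤ K * S := hcs.trans (mul_le_mul_of_nonneg_right hmono hS)
  calc 8 * α ^ 2 * T * (α / (α - 1) * K - 1)
      = α / (α - 1) * (8 * α * T * (α * K - (α - 1))) := by field_simp
    _ ≤ α / (α - 1) * (K * S) := mul_le_mul_of_nonneg_left hKS (by positivity)
    _ = α / (α - 1) * K * S := by ring

lemma mul_entropy_vecGradient_le (hα : 1 < α) {U : ι → PlanePoly}
    (h : 0 ≤ lsiDeficit (α + 1) (vecGradient U)) :
    (α - 1) / α * entropy (bergmanMeasure (α + 1))
        (fun z => planeEval z (vecGradient U ⬝ᵥ vecGradient U))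
      ≤ α⁻¹ * planeIntegral α (diskPoly ^ 2 *
          (vecGradient (vecGradient U) ⬝ᵥ vecGradient (vecGradient U))) := by
  have hα₁ : 0 < α - 1 := sub_pos.2 hα
  have hα₀ : 0 < α := by linarith
  rw [lsiDeficit, planeIntegral_succ hα, add_sub_cancel_right, sub_nonneg, ← mul_assoc diskPoly,
    ← sq] at h
  refine (mul_le_mul_of_nonneg_left h (by positivity)).trans_eq ?_
  field_simp

lemma planeIntegral_planeLaplacian_sq_le_of_forall_le (hα : 1 < α) {U : ι → PlanePoly}
    (hU : planeIntegral α (U ⬝ᵥ U) = 1)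
    (hmin : ∀ t : ℝ, lsiDeficit α U * planeIntegral α ((U + t • fun i => jacobiOp α (U i)) ⬝ᵥ
      (U + t • fun i => jacobiOp α (U i))) ≤ lsiDeficit α (U + t • fun i => jacobiOp α (U i)))
    (hgrad : 0 ≤ lsiDeficit (α + 1) (vecGradient U)) {e c : ℝ} (hc : c ≠ 0)
    (h : ∀ ε > 0, ∫ z, planeEval z (diskPoly * (vecGradient U ⬝ᵥ vecGradient U))
          * Real.log (planeEval z (U ⬝ᵥ U) + ε) ∂bergmanMeasure α
      ≤ (α - 1) / α * entropy (bergmanMeasure (α + 1))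
          (fun z => planeEval z (vecGradient U ⬝ᵥ vecGradient U)) + e
        + planeIntegral α (diskPoly * (vecGradient U ⬝ᵥ vecGradient U)) * Real.log (c + ε)) :
    planeIntegral α (diskPoly ^ 2 *
        ((fun i => planeLaplacian (U i)) ⬝ᵥ fun i => planeLaplacian (U i))) / (α * (α - 1))
      ≤ planeIntegral α (diskPoly * (vecGradient U ⬝ᵥ vecGradient U))
        * (Real.log c + lsiDeficit α U) + e := by
  have hα₁ : 0 < α - 1 := sub_pos.2 hα
  have : 0 < α := by linarith
  have hlog := neg_integral_jacobiOp_mul_log_le hα U hc h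
  have hEL := integral_jacobiOp_sq_of_forall_le hα hU hmin
  have hent := mul_entropy_vecGradient_le hα hgrad
  have hsplit : (α - 1)⁻¹ * planeIntegral α
        ((fun i => jacobiOp α (U i)) ⬝ᵥ fun i => jacobiOp α (U i))
      = 2 * planeIntegral α (diskPoly * (vecGradient U ⬝ᵥ vecGradient U))
        + α⁻¹ * planeIntegral α
          (diskPoly ^ 2 * (vecGradient (vecGradient U) ⬝ᵥ vecGradient (vecGradient U)))
        + planeIntegral α (diskPoly ^ 2 *
          ((fun i => planeLaplacian (U i)) ⬝ᵥ fun i => planeLaplacian (U i))) / (α * (α - 1)) := by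
    have := planeIntegral_bochner_vec hα U
    field_simp
    linarith
  linarith

lemma not_lsiDeficit_neg_of_forall_le (hα : 1 < α) {U : ι → PlanePoly}
    (hU : planeIntegral α (U ⬝ᵥ U) = 1)
    (hmin : ∀ t : ℝ, lsiDeficit α U * planeIntegral α ((U + t • fun i => jacobiOp α (U i)) ⬝ᵥ
      (U + t • fun i => jacobiOp α (U i))) ≤ lsiDeficit α (U + t • fun i => jacobiOp α (U i)))
    (hgrad : 0 ≤ lsiDeficit (α + 1) (vecGradient U)) : ¬lsiDeficit α U < 0 := by
  intro hneg
  have hα₁ : 0 < α - 1 := sub_pos.2 hα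
  have : 0 < α := by linarith
  have hα' : 1 < α + 1 := by linarith
  have hV₀ : vecGradient U ≠ 0 := fun h => hneg.ne (lsiDeficit_eq_zero_of_vecGradient_eq_zero hα h)
  have hU₀ : U ≠ 0 := fun h => by simp [h] at hU
  have hs (z : ℂ) := planeEval_dotProduct_self_nonneg z U
  have hV (z : ℂ) := planeEval_dotProduct_self_nonneg z (vecGradient U)
  have hN := planeIntegral_diskPoly_pow_mul_pos hα hV₀ 1
  rw [pow_one] at hN
  have hT := planeIntegral_diskPoly_pow_mul_pos hα hV₀ 2
  have hκ := planeIntegral_dotProduct_self_pos hα' hU₀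
  have hS := planeIntegral_diskPoly_sq_mul_dotProduct_self_nonneg (α := α)
    fun i => planeLaplacian (U i)
  have hSκ := planeIntegral_planeLaplacian_sq_le_of_forall_le hα hU hmin hgrad (e := 0) hκ.ne'
    fun ε hε => by
      simpa using integral_diskPoly_mul_log_add_le hα (fun z _ => hV z) hs hε
  have hSR := planeIntegral_planeLaplacian_sq_le_of_forall_le hα hU hmin hgrad one_ne_zero
    fun ε hε => (integral_planeEval_mul_log_add_le hα (fun z hz => by
      rw [map_mul, planeEval_diskPoly]
      exact mul_nonneg (one_sub_norm_sq_pos hz).le (hV z)) hs hε).trans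
      (by rw [hU]; exact add_le_add_left (entropy_diskPoly_mul_le hα (fun z _ => hV z) hN hT) _)
  have hle := mul_planeIntegral_diskPoly_sq_vecGradient_le hα hU
  set S := planeIntegral α (diskPoly ^ 2 * ((fun i => planeLaplacian (U i)) ⬝ᵥ _))
  set T := planeIntegral α (diskPoly ^ 2 * (vecGradient U ⬝ᵥ _))
  set N := planeIntegral α (diskPoly * (vecGradient U ⬝ᵥ _))
  set κ := planeIntegral (α + 1) (U ⬝ᵥ U)
  have hlt := mul_lt_eight_mul_of_lt_log (σ := S / (α * (α - 1)) / N)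
    (R := α / (α - 1) * (T / N)) hκ (by positivity) (by positivity)
    (by rw [div_lt_iff₀ hN]; nlinarith) (by rw [div_lt_iff₀ hN]; nlinarith [Real.log_one])
  refine hlt.not_ge ?_
  calc 8 * (α / (α - 1) * (T / N)) * (κ - 1)
      = (8 * α ^ 2 * T * (κ - 1)) / (α * (α - 1) * N) := by field_simp
    _ ≤ (κ * S) / (α * (α - 1) * N) := by gcongr
    _ = κ * (S / (α * (α - 1)) / N) := by field_simp

theorem lsiDeficit_nonneg (hα : 1 < α) (U : ι → PlanePoly) :
    0 ≤ lsiDeficit α U := by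
  suffices h : ∀ d : ℕ, (∀ i, (U i).totalDegree ≤ d) → 0 ≤ lsiDeficit α U from
    h (Finset.univ.sup fun i => (U i).totalDegree) fun i =>
      Finset.le_sup (f := fun i => (U i).totalDegree) (Finset.mem_univ i)
  intro d hd
  induction d generalizing ι α with
  | zero =>
    refine (lsiDeficit_eq_zero_of_vecGradient_eq_zero hα ?_).ge
    have hzero (i : ι) (j : Fin 2) : pderiv j (U i) = 0 := by
      by_contra h
      exact absurd ((totalDegree_pderiv_lt h).trans_le (hd i)) (Nat.not_lt_zero _)
    exact funext (Sum.rec (fun i => hzero i 0) fun i => hzero i 1)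
  | succ d ih =>
    by_contra! hneg
    obtain ⟨V, hV, hV1, hVneg, hmin⟩ := exists_min_lsiDeficit hα hd hneg
    refine not_lsiDeficit_neg_of_forall_le hα hV1 (fun t => hmin _ fun i => ?_)
      (ih (by linarith) (vecGradient V) ?_) hVneg
    · exact (totalDegree_add _ _).trans (max_le (hV i) ((totalDegree_smul_le _ _).trans
        ((totalDegree_jacobiOp_le α (V i)).trans (hV i))))
    · rintro (i | i) <;>
        exact (totalDegree_pderiv_le _ (V i)).trans (Nat.sub_le_of_le_add (hV i))

theorem entropy_planeEval_sq_le (hα : 1 < α) (u : PlanePoly) :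
    entropy (bergmanMeasure α) (fun z => planeEval z u ^ 2)
      ≤ (α - 1)⁻¹ * planeIntegral α (diskPoly * planeGrad u u) := by
  have h := lsiDeficit_nonneg hα fun _ : Unit => u
  rw [lsiDeficit, vecGradient_dotProduct] at h
  simpa only [dotProduct, Fintype.sum_unique, ← sq, map_pow, sub_nonneg] using h

end LogSobolev

section Powers

open MvPolynomial (X pderiv)

open Polynomial (derivative) in
lemma exists_polynomial_derivative_eq (p : Polynomial ℝ) :
    ∃ q : Polynomial ℝ, derivative q = p := by
  induction p using Polynomial.induction_on' with
  | add p q hp hq =>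
    obtain ⟨P, rfl⟩ := hp
    obtain ⟨Q, rfl⟩ := hq
    exact ⟨P + Q, Polynomial.derivative_add⟩
  | monomial n a =>
    refine ⟨Polynomial.monomial (n + 1) (a / (n + 1)), ?_⟩
    rw [Polynomial.derivative_monomial, Nat.add_sub_cancel, Nat.cast_succ,
      div_mul_cancel₀ a (by positivity)]

lemma exists_polynomial_near_with_derivative {ψ ψ' : ℝ → ℝ} {K : ℝ} (hK : 0 ≤ K)
    (hψ : ∀ t ∈ Set.Icc 0 K, HasDerivAt ψ (ψ' t) t) (hψ' : ContinuousOn ψ' (Set.Icc 0 K))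
    {η : ℝ} (hη : 0 < η) :
    ∃ R : Polynomial ℝ, ∀ t ∈ Set.Icc 0 K,
      |R.eval t - ψ t| ≤ η * K ∧ |R.derivative.eval t - ψ' t| ≤ η := by
  obtain ⟨p, hp⟩ := exists_polynomial_near_of_continuousOn 0 K ψ' hψ' η hη
  obtain ⟨q, rfl⟩ := exists_polynomial_derivative_eq p
  refine ⟨q + Polynomial.C (ψ 0 - q.eval 0), fun t ht => ⟨?_, ?_⟩⟩
  · have hmvt := (convex_Icc 0 K).norm_image_sub_le_of_norm_hasDerivWithin_le
      (fun x hx => ((q.hasDerivAt x).sub (hψ x hx)).hasDerivWithinAt)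
      (fun x hx => (hp x hx).le) ⟨le_rfl, hK⟩ ht
    calc |(q + Polynomial.C (ψ 0 - q.eval 0)).eval t - ψ t|
        = ‖(q.eval t - ψ t) - (q.eval 0 - ψ 0)‖ := by
          rw [Polynomial.eval_add, Polynomial.eval_C, Real.norm_eq_abs]; ring_nf
      _ ≤ η * ‖t - 0‖ := hmvt
      _ ≤ η * K := by
          rw [sub_zero, Real.norm_of_nonneg ht.1]
          exact mul_le_mul_of_nonneg_left ht.2 hη.le
  · simpa using (hp t ht).le

lemma tendstoLocallyUniformlyOn_Ici_of_dist_le {F : ℕ → ℝ → ℝ} {f : ℝ → ℝ}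
    (h : ∀ k : ℕ, ∀ t ∈ Set.Icc (0 : ℝ) k, |F k t - f t| ≤ 1 / ((k : ℝ) + 1)) :
    TendstoLocallyUniformlyOn F f Filter.atTop (Set.Ici 0) := by
  rw [Metric.tendstoLocallyUniformlyOn_iff]
  intro δ hδ x _
  refine ⟨Set.Ici 0 ∩ Set.Iio (x + 1), Filter.inter_mem self_mem_nhdsWithin
    (mem_nhdsWithin_of_mem_nhds (Iio_mem_nhds (lt_add_one x))), ?_⟩
  filter_upwards [Filter.eventually_ge_atTop ⌈x + 1⌉₊,
    (tendsto_one_div_add_atTop_nhds_zero_nat (𝕜 := ℝ)).eventually_lt_const hδ]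
    with k hk hkδ t ht
  rw [dist_comm, Real.dist_eq]
  exact (h k t ⟨ht.1, ht.2.le.trans (Nat.ceil_le.1 hk)⟩).trans_lt hkδ

lemma exists_polynomial_seq_tendstoLocallyUniformlyOn {ψ ψ' : ℝ → ℝ}
    (hψ : ∀ t, 0 ≤ t → HasDerivAt ψ (ψ' t) t) (hψ' : ContinuousOn ψ' (Set.Ici 0)) :
    ∃ R : ℕ → Polynomial ℝ,
      TendstoLocallyUniformlyOn (fun k t => (R k).eval t) ψ Filter.atTop (Set.Ici 0) ∧
      TendstoLocallyUniformlyOn (fun k t => (R k).derivative.eval t) ψ' Filter.atTop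
        (Set.Ici 0) := by
  choose R hR using fun k : ℕ => exists_polynomial_near_with_derivative k.cast_nonneg
    (fun t ht => hψ t ht.1) (hψ'.mono Set.Icc_subset_Ici_self)
    (η := 1 / ((k : ℝ) + 1) ^ 2) (by positivity)
  refine ⟨R, tendstoLocallyUniformlyOn_Ici_of_dist_le fun k t ht => (hR k t ht).1.trans ?_,
    tendstoLocallyUniformlyOn_Ici_of_dist_le fun k t ht => (hR k t ht).2.trans ?_⟩
  all_goals
    rw [← sub_nonneg]
    field_simp
    nlinarith [(k.cast_nonneg : (0 : ℝ) ≤ k)]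

lemma IsCompactlyCarried.continuous_entropy {X Y : Type*} [MeasurableSpace X]
    [TopologicalSpace X] [OpensMeasurableSpace X] [T2Space X] [TopologicalSpace Y]
    {μ : Measure X} [IsFiniteMeasure μ] [IsCompactlyCarried μ] {f : Y → X → ℝ}
    (hf : Continuous (Function.uncurry f)) : Continuous fun y => entropy μ (f y) :=
  (IsCompactlyCarried.continuous_integral (f := fun y x => f y x * Real.log (f y x))
    (Real.continuous_mul_log.comp hf)).sub
    (Real.continuous_mul_log.comp (IsCompactlyCarried.continuous_integral hf))

lemma planeEval_aeval (z : ℂ) (R : Polynomial ℝ) (p : PlanePoly) :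
    planeEval z (Polynomial.aeval p R) = R.eval (planeEval z p) := by
  rw [← Polynomial.aeval_algHom_apply, Polynomial.aeval_def, Polynomial.eval₂_eq_eval_map,
    Algebra.algebraMap_self, Polynomial.map_id]

lemma planeGrad_aeval (R : Polynomial ℝ) (p : PlanePoly) :
    planeGrad (Polynomial.aeval p R) (Polynomial.aeval p R)
      = Polynomial.aeval p R.derivative ^ 2 * planeGrad p p := by
  simp only [planeGrad, Derivation.map_aeval, smul_eq_mul]
  ring

theorem entropy_comp_planeEval_sq_le {α : ℝ} (hα : 1 < α) {p : PlanePoly}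
    (hp : ∀ z, 0 ≤ planeEval z p) {ψ ψ' : ℝ → ℝ}
    (hψ : ∀ t, 0 ≤ t → HasDerivAt ψ (ψ' t) t) (hψ' : ContinuousOn ψ' (Set.Ici 0)) :
    entropy (bergmanMeasure α) (fun z => ψ (planeEval z p) ^ 2)
      ≤ (α - 1)⁻¹ * ∫ z, (1 - ‖z‖ ^ 2) * (ψ' (planeEval z p) ^ 2 * planeEval z (planeGrad p p))
        ∂bergmanMeasure α := by
  have hψc : ContinuousOn ψ (Set.Ici 0) := fun t ht => (hψ t ht).continuousAt.continuousWithinAt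
  let lift (g : ℝ → ℝ) (hg : ContinuousOn g (Set.Ici 0)) : C(ℂ, ℝ) :=
    ⟨fun z => g (planeEval z p), hg.comp_continuous (continuous_planeEval p) hp⟩
  have lift_tendsto {F : ℕ → Polynomial ℝ} {g : ℝ → ℝ} (hg : ContinuousOn g (Set.Ici 0))
      (h : TendstoLocallyUniformlyOn (fun k t => (F k).eval t) g Filter.atTop (Set.Ici 0)) :
      Filter.Tendsto (fun k => lift (fun t => (F k).eval t) (F k).continuousOn) Filter.atTop
        (nhds (lift g hg)) :=
    ContinuousMap.tendsto_iff_tendstoLocallyUniformly.2 <| tendstoLocallyUniformlyOn_univ.1 <|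
      h.comp _ (fun z _ => hp z) (continuous_planeEval p).continuousOn
  obtain ⟨R, hR, hR'⟩ := exists_polynomial_seq_tendstoLocallyUniformlyOn hψ hψ'
  have hclosed : IsClosed {v : C(ℂ, ℝ) × C(ℂ, ℝ) |
      entropy (bergmanMeasure α) (fun z => v.1 z ^ 2) ≤ (α - 1)⁻¹ *
        ∫ z, (1 - ‖z‖ ^ 2) * (v.2 z ^ 2 * planeEval z (planeGrad p p)) ∂bergmanMeasure α} :=
    isClosed_le
      (IsCompactlyCarried.continuous_entropy
        (f := fun (v : C(ℂ, ℝ) × C(ℂ, ℝ)) z => v.1 z ^ 2) (by fun_prop))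
      ((IsCompactlyCarried.continuous_integral (f := fun (v : C(ℂ, ℝ) × C(ℂ, ℝ)) z =>
        (1 - ‖z‖ ^ 2) * (v.2 z ^ 2 * planeEval z (planeGrad p p))) (by fun_prop)).const_mul _)
  refine hclosed.mem_of_tendsto ((lift_tendsto hψc hR).prodMk_nhds (lift_tendsto hψ' hR'))
    (.of_forall fun k => ?_)
  have h := entropy_planeEval_sq_le hα (Polynomial.aeval p (R k))
  rw [planeIntegral_apply, planeGrad_aeval] at h
  simp only [map_mul, map_pow, planeEval_diskPoly, planeEval_aeval] at h
  exact h

variable {α : ℝ} {p : PlanePoly} {ε : ℝ}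

lemma entropy_planeEval_add_rpow_le (hα : 1 < α) (hp : ∀ z, 0 ≤ planeEval z p) (hε : 0 < ε)
    (γ : ℝ) :
    entropy (bergmanMeasure α) (fun z => (planeEval z p + ε) ^ (2 * γ))
      ≤ γ ^ 2 / (α - 1) * ∫ z, (1 - ‖z‖ ^ 2) * ((planeEval z p + ε) ^ (2 * γ - 2)
        * planeEval z (planeGrad p p)) ∂bergmanMeasure α := by
  have hderiv (t : ℝ) (ht : 0 ≤ t) :
      HasDerivAt (fun t => (t + ε) ^ γ) (γ * (t + ε) ^ (γ - 1)) t := by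
    simpa using ((hasDerivAt_id t).add_const ε).rpow_const (p := γ)
      (Or.inl (add_pos_of_nonneg_of_pos ht hε).ne')
  have hcont : ContinuousOn (fun t : ℝ => γ * (t + ε) ^ (γ - 1)) (Set.Ici 0) :=
    continuousOn_const.mul (.rpow_const (by fun_prop)
      fun t ht => Or.inl (add_pos_of_nonneg_of_pos ht hε).ne')
  have rpow_sq (z : ℂ) (b : ℝ) :
      ((planeEval z p + ε) ^ b) ^ 2 = (planeEval z p + ε) ^ (2 * b) := by
    rw [mul_comm, Real.rpow_mul (add_pos_of_nonneg_of_pos (hp z) hε).le, Real.rpow_two]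
  have h := entropy_comp_planeEval_sq_le hα hp hderiv hcont
  simp only [mul_pow, rpow_sq, mul_sub, mul_one, mul_assoc, mul_left_comm _ (γ ^ 2)] at h
  rwa [integral_const_mul, ← mul_assoc, inv_mul_eq_div] at h

lemma integral_by_parts_planeEval_add_rpow (hα : 1 < α) (hp : ∀ z, 0 ≤ planeEval z p)
    (hε : 0 < ε) (β : ℝ) :
    ∫ z, (1 - ‖z‖ ^ 2) * (β * (planeEval z p + ε) ^ (β - 1) * planeEval z (planeGrad p p)
        + (planeEval z p + ε) ^ β * planeEval z (planeLaplacian p)) ∂bergmanMeasure α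
      = 2 * (α - 1) * ∫ z, (planeEval z p + ε) ^ β *
        planeEval z (X 0 * pderiv 0 p + X 1 * pderiv 1 p) ∂bergmanMeasure α := by
  have hpos (z : ℂ) : planeEval z p + ε ≠ 0 := (add_pos_of_nonneg_of_pos (hp z) hε).ne'
  have hc (b : ℝ) : Continuous fun z => (planeEval z p + ε) ^ b :=
    .rpow_const (by fun_prop) fun z => Or.inl (hpos z)
  have := hc β
  have := hc (β - 1)
  have hderiv (i : Fin 2) (z : ℂ) :
      HasLineDerivAt ℝ (fun z => (planeEval z p + ε) ^ β * planeEval z (pderiv i p))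
        (β * (planeEval z p + ε) ^ (β - 1) * planeEval z (pderiv i p) ^ 2
          + (planeEval z p + ε) ^ β * planeEval z (pderiv i (pderiv i p))) z
        (![1, Complex.I] i) := by
    have hpow := (HasDerivAt.add_const ε (hasLineDerivAt_planeEval p z i)).rpow_const (p := β)
      (Or.inl (by simpa using hpos z))
    refine (hpow.mul (hasLineDerivAt_planeEval (pderiv i p) z i)).congr_deriv ?_
    simp only [zero_smul, add_zero]
    ring
  have hparts (i : Fin 2) := integral_by_parts hα (by fun_prop) (by fun_prop) (hderiv i)
  have hsum := congrArg₂ (· + ·) (hparts 0) (hparts 1)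
  rw [← integral_add (by exact IsCompactlyCarried.integrable (by fun_prop))
    (by exact IsCompactlyCarried.integrable (by fun_prop)), add_zero] at hsum
  rw [← sub_eq_zero, ← integral_const_mul, ← integral_sub
    (by exact IsCompactlyCarried.integrable (by fun_prop))
    (by exact IsCompactlyCarried.integrable (by fun_prop)), ← hsum]
  refine congrArg _ (funext fun z => ?_)
  simp only [planeGrad, planeLaplacian, map_add, map_mul, planeEval_X_zero, planeEval_X_one]
  ring

end Powers

section HolomorphicPolynomials

open MvPolynomial (C X pderiv pderiv_mul)

lemma exists_planeEval_eq_re_im (f : Polynomial ℂ) : ∃ a b : PlanePoly,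
    pderiv 1 a = -pderiv 0 b ∧ pderiv 1 b = pderiv 0 a ∧ ∀ z,
      f.eval z = ⟨planeEval z a, planeEval z b⟩ ∧
      f.derivative.eval z = ⟨planeEval z (pderiv 0 a), planeEval z (pderiv 0 b)⟩ := by
  induction f using Polynomial.induction_on with
  | C c =>
    refine ⟨C c.re, C c.im, ?_⟩
    simp [Complex.ext_iff]
  | add f g hf hg =>
    obtain ⟨a, b, hab, hba, hz⟩ := hf
    obtain ⟨a', b', hab', hba', hz'⟩ := hg
    refine ⟨a + a', b + b', by rw [map_add, map_add, hab, hab', neg_add],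
      by rw [map_add, map_add, hba, hba'], fun z => ?_⟩
    simp only [map_add, Polynomial.eval_add, hz, hz']
    exact ⟨rfl, rfl⟩
  | monomial n c h =>
    obtain ⟨a, b, hab, hba, hz⟩ := h
    have h01 : pderiv (R := ℝ) (0 : Fin 2) (X 1) = 0 := MvPolynomial.pderiv_X_of_ne (by decide)
    have h10 : pderiv (R := ℝ) (1 : Fin 2) (X 0) = 0 := MvPolynomial.pderiv_X_of_ne (by decide)
    refine ⟨a * X 0 - b * X 1, a * X 1 + b * X 0, ?_, ?_, fun z => ?_⟩
    · simp only [map_sub, map_add, pderiv_mul, hab, hba, h01, h10, MvPolynomial.pderiv_X_self]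
      ring
    · simp only [map_sub, map_add, pderiv_mul, hab, hba, h01, h10, MvPolynomial.pderiv_X_self]
      ring
    · rw [pow_succ, ← mul_assoc, Polynomial.derivative_mul, Polynomial.derivative_X]
      simp only [Polynomial.eval_mul, Polynomial.eval_add, Polynomial.eval_X,
        Polynomial.eval_one, hz, map_sub, map_add, map_mul, pderiv_mul, h01,
        MvPolynomial.pderiv_X_self, planeEval_X_zero, planeEval_X_one, map_one, map_zero,
        Complex.ext_iff, Complex.mul_re, Complex.mul_im, Complex.add_re, Complex.add_im,
        Complex.one_re, Complex.one_im, and_self, true_and]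
      constructor <;> ring

lemma exists_planeEval_eq_norm_sq (f : Polynomial ℂ) : ∃ p : PlanePoly, ∀ z,
    planeEval z p = ‖f.eval z‖ ^ 2 ∧
    planeEval z (planeGrad p p) = 4 * (‖f.eval z‖ ^ 2 * ‖f.derivative.eval z‖ ^ 2) ∧
    planeEval z (planeLaplacian p) = 4 * ‖f.derivative.eval z‖ ^ 2 ∧
    planeEval z (X 0 * pderiv 0 p + X 1 * pderiv 1 p)
      = 2 * (z * f.derivative.eval z * starRingEnd ℂ (f.eval z)).re := by
  obtain ⟨a, b, hab, hba, hf⟩ := exists_planeEval_eq_re_im f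
  have hcomm (u : PlanePoly) : pderiv 1 (pderiv 0 u) = pderiv 0 (pderiv 1 u) :=
    pderiv_pderiv_comm 1 0 u
  refine ⟨a * a + b * b, fun z => ?_⟩
  simp only [(hf z).1, (hf z).2, planeGrad, planeLaplacian, map_add, map_mul, map_neg, pderiv_mul,
    hab, hba, hcomm, planeEval_X_zero, planeEval_X_one, Complex.sq_norm, Complex.normSq_mk,
    Complex.mul_re, Complex.mul_im, Complex.conj_re, Complex.conj_im, true_and]
  refine ⟨?_, ?_, ?_⟩ <;> ring

lemma sq_mul_rpow_le {A B ε s : ℝ} (hA : 0 ≤ A) (hB : 0 ≤ B) (hε : 0 < ε) (hs : 0 ≤ s) :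
    (s / 4) ^ 2 * ((A + ε) ^ (s / 2 - 2) * (4 * (A * B)))
      ≤ s / 8 * ((s / 2 - 1) * (A + ε) ^ (s / 2 - 1 - 1) * (4 * (A * B))
        + (A + ε) ^ (s / 2 - 1) * (4 * B)) := by
  have hpos : 0 < A + ε := by positivity
  have hstep : (A + ε) ^ (s / 2 - 1) = (A + ε) ^ (s / 2 - 2) * (A + ε) := by
    rw [← Real.rpow_add_one hpos.ne']
    ring_nf
  rw [show s / 2 - 1 - 1 = s / 2 - 2 by ring, hstep, ← sub_nonneg]
  have hgap : 0 ≤ s / 2 * ((A + ε) ^ (s / 2 - 2) * (ε * B)) := by positivity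
  linarith

theorem entropy_norm_sq_add_rpow_le {α : ℝ} (hα : 1 < α) (f : Polynomial ℂ) {ε s : ℝ} (hε : 0 < ε)
    (hs : 0 ≤ s) :
    entropy (bergmanMeasure α) (fun z => (‖f.eval z‖ ^ 2 + ε) ^ (s / 2))
      ≤ s / 2 * ∫ z, (‖f.eval z‖ ^ 2 + ε) ^ (s / 2 - 1)
        * (z * f.derivative.eval z * starRingEnd ℂ (f.eval z)).re ∂bergmanMeasure α := by
  obtain ⟨p, hp⟩ := exists_planeEval_eq_norm_sq f
  have hp0 (z : ℂ) : 0 ≤ planeEval z p := (hp z).1 ▸ sq_nonneg _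
  have hlsi := entropy_planeEval_add_rpow_le hα hp0 hε (s / 4)
  have hparts := integral_by_parts_planeEval_add_rpow hα hp0 hε (s / 2 - 1)
  rw [show 2 * (s / 4) = s / 2 by ring] at hlsi
  simp only [(hp _).1, (hp _).2.1, (hp _).2.2.1, (hp _).2.2.2, mul_left_comm _ (2 : ℝ),
    integral_const_mul] at hlsi hparts
  have hα1 : 0 < α - 1 := sub_pos.2 hα
  have hcont (b : ℝ) : Continuous fun z => (‖f.eval z‖ ^ 2 + ε) ^ b :=
    .rpow_const (by fun_prop) fun z => Or.inl (by positivity)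
  have hmono : ∫ z, (1 - ‖z‖ ^ 2) * ((s / 4) ^ 2 * ((‖f.eval z‖ ^ 2 + ε) ^ (s / 2 - 2)
        * (4 * (‖f.eval z‖ ^ 2 * ‖f.derivative.eval z‖ ^ 2)))) ∂bergmanMeasure α
      ≤ ∫ z, (1 - ‖z‖ ^ 2) * (s / 8 * ((s / 2 - 1) * (‖f.eval z‖ ^ 2 + ε) ^ (s / 2 - 1 - 1)
        * (4 * (‖f.eval z‖ ^ 2 * ‖f.derivative.eval z‖ ^ 2))
        + (‖f.eval z‖ ^ 2 + ε) ^ (s / 2 - 1) * (4 * ‖f.derivative.eval z‖ ^ 2)))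
        ∂bergmanMeasure α := by
    have := hcont (s / 2 - 2)
    have := hcont (s / 2 - 1)
    have := hcont (s / 2 - 1 - 1)
    refine integral_mono_ae (IsCompactlyCarried.integrable (by fun_prop))
      (IsCompactlyCarried.integrable (by fun_prop)) ?_
    filter_upwards [ae_mem_ball_bergmanMeasure α] with z hz
    exact mul_le_mul_of_nonneg_left (sq_mul_rpow_le (sq_nonneg _) (sq_nonneg _) hε hs)
      (one_sub_norm_sq_pos hz).le
  simp only [mul_left_comm _ ((s / 4) ^ 2), mul_left_comm _ (s / 8), integral_const_mul] at hmono
  rw [hparts] at hmono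
  refine hlsi.trans ?_
  rw [div_mul_eq_mul_div, div_le_iff₀ hα1]
  linarith

end HolomorphicPolynomials

section Tensorization

section Prod

variable {X Y : Type*} [TopologicalSpace X] [TopologicalSpace Y] [T2Space Y] [MeasurableSpace Y]
  [OpensMeasurableSpace Y] {ν : Measure Y} [IsFiniteMeasure ν] [IsCompactlyCarried ν]
  {W : X × Y → ℝ}

lemma integral_right_pos [NeZero ν] (hW : Continuous W) (h0 : ∀ p, 0 < W p) (x : X) :
    0 < ∫ y, W (x, y) ∂ν :=
  integral_pos_of_ae_pos (IsCompactlyCarried.integrable (by fun_prop))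
    (.of_forall fun y => h0 (x, y))

lemma continuous_integral_right (hW : Continuous W) : Continuous fun x => ∫ y, W (x, y) ∂ν :=
  IsCompactlyCarried.continuous_integral (f := fun x y => W (x, y)) hW

lemma continuous_log_integral_right [NeZero ν] (hW : Continuous W) (h0 : ∀ p, 0 < W p) :
    Continuous fun x => Real.log (∫ y, W (x, y) ∂ν) :=
  (continuous_integral_right hW).log fun x => (integral_right_pos hW h0 x).ne'

variable [T2Space X] [SecondCountableTopology X] [SecondCountableTopology Y] [MeasurableSpace X]
  [OpensMeasurableSpace X] {μ : Measure X} [IsFiniteMeasure μ] [IsCompactlyCarried μ]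

lemma integral_entropy_right [NeZero ν] (hW : Continuous W) (h0 : ∀ p, 0 < W p) :
    ∫ x, entropy ν (fun y => W (x, y)) ∂μ
      = ∫ p, W p * Real.log (W p) ∂μ.prod ν
        - ∫ p, W p * Real.log (∫ y, W (p.1, y) ∂ν) ∂μ.prod ν := by
  have hWlog : Continuous fun p => W p * Real.log (W p) := Real.continuous_mul_log.comp hW
  have hWmarg : Continuous fun p => W p * Real.log (∫ y, W (p.1, y) ∂ν) :=
    hW.mul ((continuous_log_integral_right hW h0).comp continuous_fst)
  rw [integral_prod _ (IsCompactlyCarried.integrable hWlog),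
    integral_prod _ (IsCompactlyCarried.integrable hWmarg),
    ← integral_sub (IsCompactlyCarried.integrable (continuous_integral_right hWlog))
      (IsCompactlyCarried.integrable (continuous_integral_right hWmarg))]
  simp only [integral_mul_const, entropy]

lemma integral_entropy_left [NeZero μ] (hW : Continuous W) (h0 : ∀ p, 0 < W p) :
    ∫ y, entropy μ (fun x => W (x, y)) ∂ν
      = ∫ p, W p * Real.log (W p) ∂μ.prod ν
        - ∫ p, W p * Real.log (∫ x, W (x, p.2) ∂μ) ∂μ.prod ν := by
  rw [← integral_prod_swap, ← integral_prod_swap (μ := μ)]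
  exact integral_entropy_right (hW.comp continuous_swap) fun p => h0 p.swap

lemma integral_marginal_mul_marginal (hW : Continuous W) :
    ∫ p : X × Y, (∫ y, W (p.1, y) ∂ν) * (∫ x, W (x, p.2) ∂μ) ∂μ.prod ν
      = (∫ p, W p ∂μ.prod ν) * ∫ p, W p ∂μ.prod ν := by
  have hWint : Integrable W (μ.prod ν) := IsCompactlyCarried.integrable hW
  rw [integral_prod_mul (fun x => ∫ y, W (x, y) ∂ν) (fun y => ∫ x, W (x, y) ∂μ),
    ← integral_prod _ hWint, ← integral_prod_symm _ hWint]

-- Gibbs' principle for `W` against the product of its marginals.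
lemma entropy_prod_le [NeZero μ] [NeZero ν] (hW : Continuous W) (h0 : ∀ p, 0 < W p) :
    entropy (μ.prod ν) W ≤ ∫ y, entropy μ (fun x => W (x, y)) ∂ν
      + ∫ x, entropy ν (fun y => W (x, y)) ∂μ := by
  have hswap : Continuous fun p : Y × X => W (p.2, p.1) := hW.comp continuous_swap
  have hA : Continuous fun p : X × Y => ∫ x, W (x, p.2) ∂μ :=
    (continuous_integral_right hswap).comp continuous_snd
  have hB : Continuous fun p : X × Y => ∫ y, W (p.1, y) ∂ν :=
    (continuous_integral_right hW).comp continuous_fst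
  have hApos (p : X × Y) : 0 < ∫ x, W (x, p.2) ∂μ :=
    integral_right_pos hswap (fun p => h0 p.swap) p.2
  have hBpos (p : X × Y) : 0 < ∫ y, W (p.1, y) ∂ν := integral_right_pos hW h0 p.1
  have hlogA := hA.log fun p => (hApos p).ne'
  have hlogB := hB.log fun p => (hBpos p).ne'
  have hM : 0 < ∫ p, W p ∂μ.prod ν := by
    rw [integral_prod _ (IsCompactlyCarried.integrable hW)]
    exact integral_pos_of_ae_pos (IsCompactlyCarried.integrable (continuous_integral_right hW))
      (.of_forall (integral_right_pos hW h0))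
  have hlog (p : X × Y) : Real.log ((∫ y, W (p.1, y) ∂ν) * ∫ x, W (x, p.2) ∂μ)
      = Real.log (∫ y, W (p.1, y) ∂ν) + Real.log (∫ x, W (x, p.2) ∂μ) :=
    Real.log_mul (hBpos p).ne' (hApos p).ne'
  have hgibbs := integral_mul_log_le_entropy_add (μ := μ.prod ν) (f := W)
    (g := fun p => (∫ y, W (p.1, y) ∂ν) * ∫ x, W (x, p.2) ∂μ)
    (IsCompactlyCarried.integrable hW) (IsCompactlyCarried.integrable (hB.mul hA))
    (IsCompactlyCarried.integrable (Real.continuous_mul_log.comp hW))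
    (by simp only [hlog]; exact IsCompactlyCarried.integrable (hW.mul (hlogB.add hlogA)))
    (.of_forall fun p => (h0 p).le) (.of_forall fun p => mul_pos (hBpos p) (hApos p))
  simp only [hlog, mul_add] at hgibbs
  rw [integral_add (by exact IsCompactlyCarried.integrable (hW.mul hlogB))
    (by exact IsCompactlyCarried.integrable (hW.mul hlogA)), integral_marginal_mul_marginal hW,
    Real.log_mul hM.ne' hM.ne'] at hgibbs
  rw [integral_entropy_left hW h0, integral_entropy_right hW h0]
  unfold entropy at hgibbs ⊢
  linarith

end Prod

section Pi

lemma integral_pi_succ {X : Type*} [MeasurableSpace X] {n : ℕ} (μ : Fin (n + 1) → Measure X)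
    [∀ i, SigmaFinite (μ i)] (F : (Fin (n + 1) → X) → ℝ) :
    ∫ z, F z ∂Measure.pi μ
      = ∫ p, F (Fin.cons p.1 p.2) ∂(μ 0).prod (Measure.pi fun i => μ i.succ) := by
  rw [← (measurePreserving_piFinSuccAbove μ 0).symm.integral_comp' F]
  simp [MeasurableEquiv.piFinSuccAbove, Fin.insertNthEquiv]

lemma entropy_pi_succ {X : Type*} [MeasurableSpace X] {n : ℕ} (μ : Fin (n + 1) → Measure X)
    [∀ i, SigmaFinite (μ i)] (F : (Fin (n + 1) → X) → ℝ) :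
    entropy (Measure.pi μ) F = entropy ((μ 0).prod (Measure.pi fun i => μ i.succ))
      fun p => F (Fin.cons p.1 p.2) := by
  simp only [entropy, integral_pi_succ]

theorem entropy_pi_le {X : Type*} [TopologicalSpace X] [T2Space X] [SecondCountableTopology X]
    [MeasurableSpace X] [BorelSpace X] {n : ℕ} (μ : Fin n → Measure X)
    [∀ i, IsProbabilityMeasure (μ i)] [∀ i, IsCompactlyCarried (μ i)] {W : (Fin n → X) → ℝ}
    (hW : Continuous W) (h0 : ∀ z, 0 < W z) :
    entropy (Measure.pi μ) W
      ≤ ∑ i, ∫ z, entropy (μ i) (fun t => W (Function.update z i t)) ∂Measure.pi μ := by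
  induction n with
  | zero =>
    rw [show W = fun _ => W default from funext fun z => congrArg W (Subsingleton.elim _ _)]
    simp [entropy]
  | succ n ih =>
    have hcons : Continuous fun p : X × (Fin n → X) => W (Fin.cons p.1 p.2) :=
      hW.comp (Continuous.finCons (A := fun _ => X) continuous_fst continuous_snd)
    have hslice (i : Fin n) : Continuous fun p : X × (Fin n → X) =>
        entropy (μ i.succ) (fun t => W (Fin.cons p.1 (Function.update p.2 i t))) :=
      IsCompactlyCarried.continuous_entropy
        (f := fun (p : X × (Fin n → X)) t => W (Fin.cons p.1 (Function.update p.2 i t)))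
        (hcons.comp (by fun_prop : Continuous fun q : (X × (Fin n → X)) × X =>
          (q.1.1, Function.update q.1.2 i q.2)))
    have htail (i : Fin n) : Continuous fun x =>
        ∫ y, entropy (μ i.succ) (fun t => W (Fin.cons x (Function.update y i t)))
          ∂Measure.pi fun i => μ i.succ :=
      IsCompactlyCarried.continuous_integral (f := fun x y => entropy (μ i.succ) fun t =>
        W (Fin.cons x (Function.update y i t))) (hslice i)
    rw [entropy_pi_succ, Fin.sum_univ_succ]
    simp only [integral_pi_succ, Fin.update_cons_zero, ← Fin.cons_update]
    refine (entropy_prod_le hcons fun p => h0 _).trans ?_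
    rw [integral_fun_snd (fun y => entropy (μ 0) fun t => W (Fin.cons t y)), probReal_univ,
      one_smul]
    refine add_le_add_right ?_ _
    calc ∫ x, entropy (Measure.pi fun i => μ i.succ) (fun y => W (Fin.cons x y)) ∂μ 0
        ≤ ∫ x, ∑ i : Fin n, ∫ y, entropy (μ i.succ)
            (fun t => W (Fin.cons x (Function.update y i t))) ∂(Measure.pi fun i => μ i.succ)
            ∂μ 0 := by
          refine integral_mono (IsCompactlyCarried.integrable
            (IsCompactlyCarried.continuous_entropy (f := fun x y => W (Fin.cons x y)) hcons))
            (IsCompactlyCarried.integrable (continuous_finsetSum _ fun i _ => htail i))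
            fun x => ih _ (by fun_prop) fun y => h0 _
      _ = _ := by
          rw [integral_finsetSum _ fun i _ => IsCompactlyCarried.integrable (htail i)]
          exact Finset.sum_congr rfl fun i _ =>
            (integral_prod _ (IsCompactlyCarried.integrable (hslice i))).symm

lemma measurePreserving_update {ι : Type*} [Fintype ι] [DecidableEq ι] {X : ι → Type*}
    [∀ i, MeasurableSpace (X i)] (μ : ∀ i, Measure (X i)) [∀ i, IsProbabilityMeasure (μ i)]
    (i : ι) : MeasurePreserving (fun p : (∀ j, X j) × X i => Function.update p.1 i p.2)
      ((Measure.pi μ).prod (μ i)) (Measure.pi μ) := by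
  have hmeas : Measurable fun p : (∀ j, X j) × X i => Function.update p.1 i p.2 :=
    measurable_pi_lambda _ fun j => by
      rcases eq_or_ne j i with rfl | hj
      · simpa using measurable_snd
      · simpa [Function.update_of_ne hj] using measurable_fst.eval
  refine ⟨hmeas, (Measure.pi_eq fun s hs => ?_).symm⟩
  have hpre : (fun p : (∀ j, X j) × X i => Function.update p.1 i p.2) ⁻¹' Set.univ.pi s
      = Set.univ.pi (Function.update s i Set.univ) ×ˢ s i := by
    ext ⟨z, t⟩
    simp only [Set.mem_preimage, Set.mem_univ_pi, Set.mem_prod]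
    rw [Function.forall_update_iff z (fun j x => x ∈ s j),
      Function.forall_update_iff s (fun j u => z j ∈ u)]
    simp [and_comm]
  rw [Measure.map_apply hmeas (.univ_pi hs), hpre, Measure.prod_prod, Measure.pi_pi,
    ← Finset.mul_prod_erase _ _ (Finset.mem_univ i), Function.update_self, measure_univ, one_mul,
    ← Finset.mul_prod_erase _ (fun j => μ j (s j)) (Finset.mem_univ i), mul_comm]
  congr 1
  exact Finset.prod_congr rfl fun j hj => by rw [Function.update_of_ne (Finset.ne_of_mem_erase hj)]

lemma integral_integral_update {X : Type*} [MeasurableSpace X] {ι : Type*} [Fintype ι]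
    [DecidableEq ι] (μ : ι → Measure X) [∀ i, IsProbabilityMeasure (μ i)] (i : ι)
    {F : (ι → X) → ℝ} (hF : Integrable F (Measure.pi μ)) :
    ∫ z, ∫ t, F (Function.update z i t) ∂μ i ∂Measure.pi μ = ∫ z, F z ∂Measure.pi μ := by
  have h := measurePreserving_update μ i
  have hF' : AEStronglyMeasurable F (Measure.map _ _) := h.map_eq.symm ▸ hF.aestronglyMeasurable
  rw [← integral_prod (fun p : (ι → X) × X => F (Function.update p.1 i p.2))
    (h.integrable_comp_of_integrable hF), ← integral_map h.measurable.aemeasurable hF', h.map_eq]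

lemma integral_entropy_update_le {X : Type*} [TopologicalSpace X] [T2Space X]
    [SecondCountableTopology X] [MeasurableSpace X] [OpensMeasurableSpace X] {ι : Type*}
    [Fintype ι] [DecidableEq ι] (μ : ι → Measure X) [∀ i, IsProbabilityMeasure (μ i)]
    [∀ i, IsCompactlyCarried (μ i)] (i : ι) {W K : (ι → X) → ℝ} (hW : Continuous W)
    (hK : Continuous K) (h : ∀ z, entropy (μ i) (fun t => W (Function.update z i t))
      ≤ ∫ t, K (Function.update z i t) ∂μ i) :
    ∫ z, entropy (μ i) (fun t => W (Function.update z i t)) ∂Measure.pi μ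
      ≤ ∫ z, K z ∂Measure.pi μ := by
  have hupdate : Continuous fun p : (ι → X) × X => Function.update p.1 i p.2 := by fun_prop
  rw [← integral_integral_update μ i (IsCompactlyCarried.integrable hK)]
  refine integral_mono ?_ ?_ h
  · exact IsCompactlyCarried.integrable (IsCompactlyCarried.continuous_entropy
      (f := fun z t => W (Function.update z i t)) (hW.comp hupdate))
  · exact IsCompactlyCarried.integrable (IsCompactlyCarried.continuous_integral
      (f := fun z t => K (Function.update z i t)) (hK.comp hupdate))

end Pi

end Tensorization

section HomogeneousPolynomials

open MvPolynomial (eval pderiv)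

/-- The restriction of a polynomial to the line through `z` in the direction of the `i`-th
coordinate, as a polynomial in that coordinate. -/
noncomputable def slicePolynomial {R ι : Type*} [CommSemiring R] [DecidableEq ι] (z : ι → R)
    (i : ι) : MvPolynomial ι R →ₐ[R] Polynomial R :=
  MvPolynomial.aeval (Function.update (fun j => Polynomial.C (z j)) i Polynomial.X)

lemma eval_slicePolynomial {R ι : Type*} [CommSemiring R] [DecidableEq ι] (z : ι → R) (i : ι)
    (Q : MvPolynomial ι R) (t : R) :
    (slicePolynomial z i Q).eval t = eval (Function.update z i t) Q := by
  induction Q using MvPolynomial.induction_on with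
  | C a => simp [slicePolynomial]
  | add p q hp hq => simp [hp, hq]
  | mul_X p j hp =>
    rw [map_mul, Polynomial.eval_mul, hp]
    rcases eq_or_ne j i with rfl | hj
    · simp [slicePolynomial]
    · simp [slicePolynomial, hj]

lemma derivative_slicePolynomial {R ι : Type*} [CommSemiring R] [DecidableEq ι] (z : ι → R)
    (i : ι) (Q : MvPolynomial ι R) :
    (slicePolynomial z i Q).derivative = slicePolynomial z i (pderiv i Q) := by
  induction Q using MvPolynomial.induction_on with
  | C a => simp [slicePolynomial]
  | add p q hp hq => simp [hp, hq]
  | mul_X p j hp =>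
    rw [map_mul, Polynomial.derivative_mul, hp, MvPolynomial.pderiv_mul, map_add, map_mul, map_mul]
    rcases eq_or_ne j i with rfl | hj
    · simp [slicePolynomial]
    · simp [slicePolynomial, hj, MvPolynomial.pderiv_X_of_ne hj]

lemma entropy_update_norm_sq_add_rpow_le {ι : Type*} [DecidableEq ι] {α : ℝ} (hα : 1 < α)
    (Q : MvPolynomial ι ℂ) (z : ι → ℂ) (i : ι) {ε s : ℝ} (hε : 0 < ε) (hs : 0 ≤ s) :
    entropy (bergmanMeasure α)
        (fun t => (‖eval (Function.update z i t) Q‖ ^ 2 + ε) ^ (s / 2))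
      ≤ ∫ t, (fun z => s / 2 * ((‖eval z Q‖ ^ 2 + ε) ^ (s / 2 - 1)
        * (z i * eval z (pderiv i Q) * starRingEnd ℂ (eval z Q)).re)) (Function.update z i t)
        ∂bergmanMeasure α := by
  have h := entropy_norm_sq_add_rpow_le hα (slicePolynomial z i Q) hε hs
  rw [← integral_const_mul] at h
  simpa only [derivative_slicePolynomial, eval_slicePolynomial, Function.update_self] using h

lemma sum_mul_pderiv_mul_conj_re {ι : Type*} [Fintype ι] {m : ℕ} {Q : MvPolynomial ι ℂ}
    (hQ : Q.IsHomogeneous m) (z : ι → ℂ) :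
    ∑ i, (z i * eval z (pderiv i Q) * starRingEnd ℂ (eval z Q)).re = m * ‖eval z Q‖ ^ 2 := by
  have heuler : ∑ i, z i * eval z (pderiv i Q) = m * eval z Q := by
    simpa using congrArg (eval z) hQ.sum_X_mul_pderiv
  rw [← Complex.re_sum, ← Finset.sum_mul, heuler, mul_assoc, Complex.mul_conj,
    Complex.normSq_eq_norm_sq]
  norm_cast

lemma continuous_norm_sq_add_rpow {ι : Type*} (Q : MvPolynomial ι ℂ) {ε : ℝ} (hε : 0 < ε)
    (b : ℝ) : Continuous fun z => (‖eval z Q‖ ^ 2 + ε) ^ b :=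
  have heval : Continuous fun z => eval z Q := MvPolynomial.continuous_eval Q
  .rpow_const (by fun_prop) fun z => Or.inl (by positivity)

lemma continuous_norm_sq_add_rpow_mul_pderiv {ι : Type*} (Q : MvPolynomial ι ℂ) {ε : ℝ}
    (hε : 0 < ε) (b : ℝ) (i : ι) : Continuous fun z => (‖eval z Q‖ ^ 2 + ε) ^ b
      * (z i * eval z (pderiv i Q) * starRingEnd ℂ (eval z Q)).re := by
  have heval (P : MvPolynomial ι ℂ) : Continuous fun z => eval z P :=
    MvPolynomial.continuous_eval P
  exact (continuous_norm_sq_add_rpow Q hε b).mul (by fun_prop)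

theorem entropy_homogeneous_le {n m : ℕ} {a : Fin n → ℝ} (ha : ∀ i, 1 < a i)
    {Q : MvPolynomial (Fin n) ℂ} (hQ : Q.IsHomogeneous m) {ε s : ℝ} (hε : 0 < ε) (hs : 0 ≤ s) :
    entropy (Measure.pi fun i => bergmanMeasure (a i)) (fun z => (‖eval z Q‖ ^ 2 + ε) ^ (s / 2))
      ≤ s * (m / 2) * ∫ z, (‖eval z Q‖ ^ 2 + ε) ^ (s / 2)
          ∂Measure.pi fun i => bergmanMeasure (a i) := by
  have hprob (i : Fin n) := isProbabilityMeasure_bergmanMeasure (ha i)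
  have hpos (z : Fin n → ℂ) : 0 < ‖eval z Q‖ ^ 2 + ε := by positivity
  have hrpow := continuous_norm_sq_add_rpow Q hε (s / 2)
  have hK (i : Fin n) :=
    (continuous_norm_sq_add_rpow_mul_pderiv Q hε (s / 2 - 1) i).const_mul (s / 2)
  refine (entropy_pi_le _ hrpow fun z => Real.rpow_pos_of_pos (hpos z) _).trans
    ((Finset.sum_le_sum fun i _ => integral_entropy_update_le _ i hrpow (hK i) fun z =>
      entropy_update_norm_sq_add_rpow_le (ha i) Q z i hε hs).trans ?_)
  rw [← integral_finsetSum _ fun i _ => IsCompactlyCarried.integrable (hK i), ← integral_const_mul]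
  refine integral_mono (IsCompactlyCarried.integrable (continuous_finsetSum _ fun i _ => hK i))
    (IsCompactlyCarried.integrable (hrpow.const_mul _)) fun z => ?_
  calc ∑ i, s / 2 * ((‖eval z Q‖ ^ 2 + ε) ^ (s / 2 - 1)
        * (z i * eval z (pderiv i Q) * starRingEnd ℂ (eval z Q)).re)
      = s / 2 * ((‖eval z Q‖ ^ 2 + ε) ^ (s / 2 - 1) * (m * ‖eval z Q‖ ^ 2)) := by
        rw [← Finset.mul_sum, ← Finset.mul_sum, sum_mul_pderiv_mul_conj_re hQ]
    _ ≤ s / 2 * ((‖eval z Q‖ ^ 2 + ε) ^ (s / 2 - 1) * (m * (‖eval z Q‖ ^ 2 + ε))) := by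
        gcongr
        exact le_add_of_nonneg_right hε.le
    _ = s * (m / 2) * (‖eval z Q‖ ^ 2 + ε) ^ (s / 2) := by
        rw [mul_left_comm _ (m : ℝ), ← Real.rpow_add_one (hpos z).ne', sub_add_cancel]
        ring

end HomogeneousPolynomials

section Hypercontractivity

open ProbabilityTheory

section Gross

variable {X : Type*} [MeasurableSpace X] {μ : Measure X} [NeZero μ] {U : X → ℝ} {c : ℝ}

lemma antitoneOn_cgf_div_sub_mul_log
    (hint : ∀ s, 0 < s → Integrable (fun x => Real.exp (s * U x)) μ)
    (hent : ∀ s, 0 < s → entropy μ (fun x => Real.exp (s * U x)) ≤ s * c * mgf U μ s) :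
    AntitoneOn (fun s => cgf U μ s / s - c * Real.log s) (Set.Ioi 0) := by
  have hmem (s : ℝ) (hs : 0 < s) : s ∈ interior (integrableExpSet U μ) :=
    mem_interior_iff_mem_nhds.2 (Filter.mem_of_superset (Ioi_mem_nhds hs) hint)
  have hderiv (s : ℝ) (hs : 0 < s) :
      HasDerivAt (fun s => cgf U μ s / s - c * Real.log s)
        ((deriv (cgf U μ) s * s - cgf U μ s * 1) / s ^ 2 - c * s⁻¹) s :=
    ((analyticAt_cgf (hmem s hs)).differentiableAt.hasDerivAt.div (hasDerivAt_id s) hs.ne').sub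
      ((Real.hasDerivAt_log hs.ne').const_mul c)
  refine antitoneOn_of_hasDerivWithinAt_nonpos (convex_Ioi 0)
    (fun s hs => (hderiv s hs).continuousAt.continuousWithinAt)
    (fun s hs => (hderiv s (interior_subset hs)).hasDerivWithinAt) fun s hs => ?_
  replace hs : 0 < s := interior_subset hs
  have hmgf := mgf_pos_iff.2 (hint s hs)
  have hle := hent s hs
  simp only [entropy, Real.log_exp, mul_left_comm _ s, integral_const_mul,
    mul_comm (Real.exp _)] at hle
  change _ - mgf U μ s * cgf U μ s ≤ _ at hle
  rw [deriv_cgf (hmem s hs)]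
  generalize ∫ x, U x * Real.exp (s * U x) ∂μ = D at hle ⊢
  have hquot : (D / mgf U μ s * s - cgf U μ s * 1) / s ^ 2 - c * s⁻¹
      = (s * D - mgf U μ s * cgf U μ s - s * c * mgf U μ s) / (s ^ 2 * mgf U μ s) := by
    field_simp
  rw [hquot]
  exact div_nonpos_of_nonpos_of_nonneg (by linarith) (by positivity)

lemma mgf_rpow_le_of_entropy_le
    (hint : ∀ s, 0 < s → Integrable (fun x => Real.exp (s * U x)) μ)
    (hent : ∀ s, 0 < s → entropy μ (fun x => Real.exp (s * U x)) ≤ s * c * mgf U μ s)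
    {p q : ℝ} (hp : 0 < p) (hpq : p ≤ q) :
    mgf U μ q ^ (1 / q) ≤ (q / p) ^ c * mgf U μ p ^ (1 / p) := by
  have hq := hp.trans_le hpq
  have h := antitoneOn_cgf_div_sub_mul_log hint hent (Set.mem_Ioi.2 hp) (Set.mem_Ioi.2 hq) hpq
  rw [Real.rpow_def_of_pos (mgf_pos_iff.2 (hint q hq)),
    Real.rpow_def_of_pos (mgf_pos_iff.2 (hint p hp)), Real.rpow_def_of_pos (div_pos hq hp),
    ← Real.exp_add, Real.exp_le_exp, Real.log_div hq.ne' hp.ne']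
  simp only [cgf, div_eq_mul_inv, one_mul] at h ⊢
  linarith

end Gross

section ProductsOfDisks

open MvPolynomial (eval)

variable {n m : ℕ} {a : Fin n → ℝ} {Q : MvPolynomial (Fin n) ℂ} {p q : ℝ}

lemma integral_norm_sq_add_rpow_homogeneous_le (ha : ∀ i, 1 < a i) (hQ : Q.IsHomogeneous m)
    {ε : ℝ} (hε : 0 < ε) (hp : 0 < p) (hpq : p ≤ q) :
    (∫ z, (‖eval z Q‖ ^ 2 + ε) ^ (q / 2) ∂Measure.pi fun i => bergmanMeasure (a i)) ^ (1 / q)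
      ≤ (q / p) ^ ((m : ℝ) / 2) * (∫ z, (‖eval z Q‖ ^ 2 + ε) ^ (p / 2)
        ∂Measure.pi fun i => bergmanMeasure (a i)) ^ (1 / p) := by
  have hprob (i : Fin n) := isProbabilityMeasure_bergmanMeasure (ha i)
  have hexp (s : ℝ) (z : Fin n → ℂ) : (‖eval z Q‖ ^ 2 + ε) ^ (s / 2)
      = Real.exp (s * (Real.log (‖eval z Q‖ ^ 2 + ε) / 2)) := by
    rw [Real.rpow_def_of_pos (by positivity)]
    ring_nf
  have hint (s : ℝ) := IsCompactlyCarried.integrable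
    (μ := Measure.pi fun i => bergmanMeasure (a i)) (continuous_norm_sq_add_rpow Q hε (s / 2))
  have hent (s : ℝ) (hs : 0 < s) := entropy_homogeneous_le ha hQ hε hs.le
  simp only [hexp] at hint hent ⊢
  exact mgf_rpow_le_of_entropy_le (fun s _ => hint s) hent hp hpq

theorem integral_norm_rpow_homogeneous_le (ha : ∀ i, 1 < a i) (hQ : Q.IsHomogeneous m)
    (hp : 0 < p) (hpq : p ≤ q) :
    (∫ z, ‖eval z Q‖ ^ q ∂Measure.pi fun i => bergmanMeasure (a i)) ^ (1 / q)
      ≤ (q / p) ^ ((m : ℝ) / 2)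
        * (∫ z, ‖eval z Q‖ ^ p ∂Measure.pi fun i => bergmanMeasure (a i)) ^ (1 / p) := by
  have hcont (s : ℝ) (hs : 0 < s) : Continuous fun ε : ℝ =>
      (∫ z, (‖eval z Q‖ ^ 2 + |ε|) ^ (s / 2)
        ∂Measure.pi fun i => bergmanMeasure (a i)) ^ (1 / s) := by
    have heval : Continuous fun z => eval z Q := MvPolynomial.continuous_eval Q
    have hbase : Continuous fun x : ℝ × (Fin n → ℂ) =>
        (‖eval x.2 Q‖ ^ 2 + |x.1|) ^ (s / 2) :=
      Continuous.rpow_const (by fun_prop) fun _ => Or.inr (by positivity)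
    exact (IsCompactlyCarried.continuous_integral
      (f := fun (ε : ℝ) z => (‖eval z Q‖ ^ 2 + |ε|) ^ (s / 2)) hbase).rpow_const
      fun _ => Or.inr (by positivity)
  have hzero (s : ℝ) (z : Fin n → ℂ) : (‖eval z Q‖ ^ 2 + |(0 : ℝ)|) ^ (s / 2) = ‖eval z Q‖ ^ s := by
    rw [abs_zero, add_zero, ← Real.rpow_natCast, ← Real.rpow_mul (norm_nonneg _)]
    congr 1
    push_cast
    ring
  have hlim := le_of_tendsto_of_tendsto (b := nhdsWithin 0 {0}ᶜ)
    ((hcont q (hp.trans_le hpq)).tendsto 0 |>.mono_left nhdsWithin_le_nhds)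
    (((hcont p hp).const_mul _).tendsto 0 |>.mono_left nhdsWithin_le_nhds)
    (eventually_nhdsWithin_of_forall fun ε hε =>
      integral_norm_sq_add_rpow_homogeneous_le ha hQ (abs_pos.2 hε) hp hpq)
  simpa only [hzero] using hlim

end ProductsOfDisks

end Hypercontractivity

section BoundaryCircle

open Filter Topology
open MvPolynomial (eval)

lemma integral_pi_snoc {X : Type*} [MeasurableSpace X] {n : ℕ} (μ : Fin (n + 1) → Measure X)
    [∀ i, SigmaFinite (μ i)] (F : (Fin (n + 1) → X) → ℝ) :
    ∫ z, F z ∂Measure.pi μ = ∫ p, F (Fin.snoc p.2 p.1)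
      ∂(μ (Fin.last n)).prod (Measure.pi fun i : Fin n => μ i.castSucc) := by
  rw [← (measurePreserving_piFinSuccAbove μ (Fin.last n)).symm.integral_comp' F]
  simp [MeasurableEquiv.piFinSuccAbove, Fin.insertNthEquiv, Fin.insertNth_last']

lemma eval_mul_of_isHomogeneous {σ R : Type*} [CommSemiring R] {m : ℕ} {Q : MvPolynomial σ R}
    (hQ : Q.IsHomogeneous m) (c : R) (z : σ → R) :
    eval (fun i => c * z i) Q = c ^ m * eval z Q := by
  rw [MvPolynomial.eval_eq, MvPolynomial.eval_eq, Finset.mul_sum]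
  refine Finset.sum_congr rfl fun d hd => ?_
  have hdeg : ∑ i ∈ d.support, d i = m := by
    rw [← hQ (MvPolynomial.mem_support_iff.1 hd)]
    exact DFunLike.congr_fun Finsupp.degree_eq_weight_one d
  simp_rw [mul_pow]
  rw [Finset.prod_mul_distrib, Finset.prod_pow_eq_pow_sum, hdeg]
  ring

lemma exists_abs_le_add_mul_of_isCompact {X : Type*} [TopologicalSpace X] {K : Set X}
    (hK : IsCompact K) {f g : X → ℝ} (hf : Continuous f) (hg : Continuous g)
    (hg0 : ∀ x ∈ K, 0 ≤ g x) (hfg : ∀ x ∈ K, g x = 0 → f x = 0) {ε : ℝ} (hε : 0 < ε) :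
    ∃ C, ∀ x ∈ K, |f x| ≤ ε + C * g x := by
  have hgpos (x : X) (hx : x ∈ K ∩ {x | ε ≤ |f x|}) : 0 < g x :=
    (hg0 x hx.1).lt_of_ne' fun h => (hε.trans_le hx.2).ne' (by rw [hfg x hx.1 h, abs_zero])
  obtain ⟨C, hC⟩ := (hK.inter_right (isClosed_le continuous_const hf.abs))
    |>.exists_bound_of_continuousOn
      (hf.continuousOn.div hg.continuousOn fun x hx => (hgpos x hx).ne')
  refine ⟨|C|, fun x hx => ?_⟩
  by_cases hfx : ε ≤ |f x|
  · have hgx := hgpos x ⟨hx, hfx⟩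
    have hquot : |f x| / g x ≤ C := by
      simpa only [Pi.div_apply, norm_div, Real.norm_eq_abs, abs_of_pos hgx] using hC x ⟨hx, hfx⟩
    calc |f x| ≤ C * g x := (div_le_iff₀ hgx).1 hquot
      _ ≤ |C| * g x := by gcongr; exact le_abs_self C
      _ ≤ ε + |C| * g x := by linarith
  · have := mul_nonneg (abs_nonneg C) (hg0 x hx)
    linarith

lemma integral_one_sub_norm_sq_bergmanMeasure {β : ℝ} (hβ : 1 < β) :
    ∫ z, (1 - ‖z‖ ^ 2) ∂bergmanMeasure β = (β - 1) / β := by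
  have := isProbabilityMeasure_bergmanMeasure (α := β + 1) (by linarith)
  have h := integral_bergmanMeasure_succ hβ fun _ => 1
  have : β - 1 ≠ 0 := by linarith
  simp only [integral_const, probReal_univ, smul_eq_mul, mul_one] at h
  field_simp at h ⊢
  linarith

lemma abs_integral_bergmanMeasure_sub_le {H : ℂ → ℝ} (hH : Continuous H) {c ε C : ℝ}
    (h : ∀ w ∈ closedBall (0 : ℂ) 1, |H w - c| ≤ ε + C * (1 - ‖w‖ ^ 2)) {β : ℝ} (hβ : 1 < β) :
    |∫ w, H w ∂bergmanMeasure β - c| ≤ ε + C * ((β - 1) / β) := by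
  have := isProbabilityMeasure_bergmanMeasure hβ
  have hint {f : ℂ → ℝ} (hf : Continuous f) : Integrable f (bergmanMeasure β) :=
    IsCompactlyCarried.integrable hf
  calc |∫ w, H w ∂bergmanMeasure β - c|
      = |∫ w, (H w - c) ∂bergmanMeasure β| := by
        rw [integral_sub (hint hH) (integrable_const c), integral_const, probReal_univ, one_smul]
    _ ≤ ∫ w, |H w - c| ∂bergmanMeasure β := abs_integral_le_integral_abs
    _ ≤ ∫ w, (ε + C * (1 - ‖w‖ ^ 2)) ∂bergmanMeasure β := by
        refine integral_mono_ae (hint (by fun_prop)) (hint (by fun_prop)) ?_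
        exact (ae_mem_ball_bergmanMeasure β).mono fun w hw => h w (ball_subset_closedBall hw)
    _ = ε + C * ((β - 1) / β) := by
        rw [integral_add (integrable_const ε) (hint (by fun_prop)), integral_const_mul,
          integral_one_sub_norm_sq_bergmanMeasure hβ, integral_const, probReal_univ, one_smul]

lemma tendsto_integral_bergmanMeasure_one {H : ℂ → ℝ} (hH : Continuous H)
    (hrot : ∀ (c : Circle) w, H (c * w) = H w) :
    Tendsto (fun β => ∫ w, H w ∂bergmanMeasure β) (𝓝[>] 1) (𝓝 (H 1)) := by
  have hcircle (w : ℂ) (hw : 1 - ‖w‖ ^ 2 = 0) : H w = H 1 := by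
    have hnorm : ‖w‖ = 1 := by nlinarith [norm_nonneg w]
    simpa using hrot ⟨w, mem_sphere_zero_iff_norm.2 hnorm⟩ 1
  refine Metric.tendsto_nhds.2 fun ε hε => ?_
  obtain ⟨C, hC⟩ := exists_abs_le_add_mul_of_isCompact (isCompact_closedBall (0 : ℂ) 1)
    (f := fun w => H w - H 1) (g := fun w => 1 - ‖w‖ ^ 2) (by fun_prop) (by fun_prop)
    (fun w hw => by nlinarith [norm_nonneg w, mem_closedBall_zero_iff.1 hw])
    (fun w _ hw => sub_eq_zero.2 (hcircle w hw)) (half_pos hε)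
  have hcont : ContinuousAt (fun β : ℝ => ε / 2 + C * ((β - 1) / β)) 1 := by
    fun_prop (disch := norm_num)
  have hev : ∀ᶠ β in 𝓝 (1 : ℝ), ε / 2 + C * ((β - 1) / β) < ε :=
    hcont.eventually_lt_const (by simpa using hε)
  filter_upwards [self_mem_nhdsWithin, mem_nhdsWithin_of_mem_nhds hev] with β hβ hlt
  exact (abs_integral_bergmanMeasure_sub_le hH hC hβ).trans_lt hlt

section SliceMoment

variable {n m : ℕ} {a : Fin n → ℝ} {s : ℝ} {Q : MvPolynomial (Fin (n + 1)) ℂ}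

/-- The `s`-th moment of `|Q(𝐳, w)|` in `𝐳`, as a function of `w`. The weights `a` of the disks are
arbitrary, and `w` is any complex number. -/
noncomputable def sliceMoment (a : Fin n → ℝ) (s : ℝ) (Q : MvPolynomial (Fin (n + 1)) ℂ) (w : ℂ) :
    ℝ :=
  ∫ z, ‖eval (Fin.snoc z w : Fin (n + 1) → ℂ) Q‖ ^ s ∂Measure.pi fun i => bergmanMeasure (a i)

lemma sliceMoment_nonneg (a : Fin n → ℝ) (s : ℝ) (Q : MvPolynomial (Fin (n + 1)) ℂ) (w : ℂ) :
    0 ≤ sliceMoment a s Q w :=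
  integral_nonneg fun _ => by positivity

lemma continuous_norm_eval_snoc_rpow (hs : 0 < s) : Continuous fun p : ℂ × (Fin n → ℂ) =>
    ‖eval (Fin.snoc p.2 p.1 : Fin (n + 1) → ℂ) Q‖ ^ s :=
  ((MvPolynomial.continuous_eval Q).comp
    (Continuous.finSnoc continuous_snd continuous_fst)).norm.rpow_const fun _ => Or.inr hs.le

lemma continuous_sliceMoment (a : Fin n → ℝ) (hs : 0 < s) : Continuous (sliceMoment a s Q) :=
  IsCompactlyCarried.continuous_integral
    (f := fun w z => ‖eval (Fin.snoc z w : Fin (n + 1) → ℂ) Q‖ ^ s)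
    (continuous_norm_eval_snoc_rpow hs)

lemma eval_snoc_mul_of_isHomogeneous (hQ : Q.IsHomogeneous m) (c w : ℂ) (z : Fin n → ℂ) :
    eval (Fin.snoc (fun i => c * z i) (c * w) : Fin (n + 1) → ℂ) Q
      = c ^ m * eval (Fin.snoc z w : Fin (n + 1) → ℂ) Q := by
  rw [← eval_mul_of_isHomogeneous hQ]
  congr 2 with i
  refine Fin.lastCases ?_ (fun j => ?_) i <;> simp

lemma sliceMoment_circle_mul (hQ : Q.IsHomogeneous m) (c : Circle) (w : ℂ) :
    sliceMoment a s Q (c * w) = sliceMoment a s Q w := by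
  have hmp := measurePreserving_pi (fun i => bergmanMeasure (a i)) (fun i => bergmanMeasure (a i))
    fun i => measurePreserving_circle_mul_bergmanMeasure (a i) c
  have hemb :=
    (Homeomorph.piCongrRight fun _ : Fin n => (rotation c).toHomeomorph).measurableEmbedding
  rw [sliceMoment, ← hmp.integral_comp hemb]
  simp only [eval_snoc_mul_of_isHomogeneous hQ, norm_mul, norm_pow, Circle.norm_coe, one_pow,
    one_mul, sliceMoment]

lemma integral_pi_snoc_eq_integral_sliceMoment (a : Fin n → ℝ) (β : ℝ) (hs : 0 < s) :
    ∫ z, ‖eval z Q‖ ^ s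
        ∂(Measure.pi fun i => bergmanMeasure ((Fin.snoc a β : Fin (n + 1) → ℝ) i))
      = ∫ w, sliceMoment a s Q w ∂bergmanMeasure β := by
  rw [integral_pi_snoc]
  simp only [Fin.snoc_last, Fin.snoc_castSucc]
  exact integral_prod _ (IsCompactlyCarried.integrable (continuous_norm_eval_snoc_rpow hs))

lemma sliceMoment_one_rpow_le (ha : ∀ i, 1 < a i) (hQ : Q.IsHomogeneous m) {p q : ℝ} (hp : 0 < p)
    (hpq : p ≤ q) :
    sliceMoment a q Q 1 ^ (1 / q)
      ≤ (q / p) ^ ((m : ℝ) / 2) * sliceMoment a p Q 1 ^ (1 / p) := by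
  have hq : 0 < q := hp.trans_le hpq
  have hlim (s : ℝ) (hs : 0 < s) : Tendsto
      (fun β => (∫ w, sliceMoment a s Q w ∂bergmanMeasure β) ^ (1 / s)) (𝓝[>] 1)
      (𝓝 (sliceMoment a s Q 1 ^ (1 / s))) :=
    (tendsto_integral_bergmanMeasure_one (continuous_sliceMoment a hs)
      (sliceMoment_circle_mul hQ)).rpow_const (Or.inr (by positivity))
  refine le_of_tendsto_of_tendsto (hlim q hq) ((hlim p hp).const_mul _) ?_
  filter_upwards [self_mem_nhdsWithin] with β hβ
  rw [← integral_pi_snoc_eq_integral_sliceMoment a β hq,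
    ← integral_pi_snoc_eq_integral_sliceMoment a β hp]
  refine integral_norm_rpow_homogeneous_le (Fin.lastCases ?_ fun j => ?_) hQ hp hpq
  · simpa using hβ
  · simpa using ha j

lemma circleAverage_sliceMoment (hQ : Q.IsHomogeneous m) :
    (2 * Real.pi)⁻¹ * ∫ θ in (0 : ℝ)..(2 * Real.pi),
      sliceMoment a s Q (Complex.exp (θ * Complex.I)) = sliceMoment a s Q 1 := by
  have h (θ : ℝ) : sliceMoment a s Q (Complex.exp (θ * Complex.I)) = sliceMoment a s Q 1 := by
    rw [← Circle.coe_exp, ← mul_one (Circle.exp θ : ℂ), sliceMoment_circle_mul hQ]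
  simp only [h, intervalIntegral.integral_const, sub_zero, smul_eq_mul]
  rw [inv_mul_cancel_left₀ (by positivity)]

end SliceMoment

end BoundaryCircle

lemma sqrt_div_pow_mul_div_rpow {p q : ℝ} (hp : 0 < p) (hq : 0 < q) (m : ℕ) :
    √(p / q) ^ m * (q / p) ^ ((m : ℝ) / 2) = 1 := by
  have hpow : √(p / q) ^ m = (p / q) ^ ((m : ℝ) / 2) := by
    rw [Real.sqrt_eq_rpow, ← Real.rpow_natCast, ← Real.rpow_mul (by positivity)]
    ring_nf
  rw [hpow, ← Real.mul_rpow (by positivity) (by positivity), div_mul_div_cancel₀ hq.ne',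
    div_self hp.ne', Real.one_rpow]

theorem mixed_norm_hypercontractive_general
    (n m : ℕ)
    (α p q : ℝ) (hα : 1 < α) (hp : 0 < p) (hpq : p ≤ q)
    (r₀ : ℝ) (hr₀ : r₀ = Real.sqrt (p / q))
    (Q : MvPolynomial (Fin (n + 1)) ℂ) (hQ : Q.IsHomogeneous m) :
    (((2 * Real.pi)⁻¹ *
        ∫ θ in (0 : ℝ)..(2 * Real.pi),
          ∫ z, ‖MvPolynomial.eval
              (Fin.snoc (fun i => (r₀ : ℂ) * z i) ((r₀ : ℂ) * Complex.exp (θ * Complex.I))) Q‖ ^ q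
            ∂(bergmanMeasurePi n α)) ^ (1 / q) ≤
      ((2 * Real.pi)⁻¹ *
        ∫ θ in (0 : ℝ)..(2 * Real.pi),
          ∫ z, ‖MvPolynomial.eval
              (Fin.snoc z (Complex.exp (θ * Complex.I))) Q‖ ^ p
            ∂(bergmanMeasurePi n α)) ^ (1 / p)) ∧
    ((2 * Real.pi)⁻¹ *
        ∫ θ in (0 : ℝ)..(2 * Real.pi),
          ∫ z, ‖MvPolynomial.eval
              (Fin.snoc z (Complex.exp (θ * Complex.I))) Q‖ ^ q
            ∂(bergmanMeasurePi n α)) ^ (1 / q) ≤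
      (q / p) ^ ((m : ℝ) / 2) *
        ((2 * Real.pi)⁻¹ *
          ∫ θ in (0 : ℝ)..(2 * Real.pi),
            ∫ z, ‖MvPolynomial.eval
                (Fin.snoc z (Complex.exp (θ * Complex.I))) Q‖ ^ p
              ∂(bergmanMeasurePi n α)) ^ (1 / p) := by
  have hq : 0 < q := hp.trans_le hpq
  have hmean (s : ℝ) : (2 * Real.pi)⁻¹ * ∫ θ in (0 : ℝ)..(2 * Real.pi),
      ∫ z, ‖MvPolynomial.eval (Fin.snoc z (Complex.exp (θ * Complex.I))) Q‖ ^ s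
        ∂(bergmanMeasurePi n α) = sliceMoment (fun _ => α) s Q 1 := circleAverage_sliceMoment hQ
  have hle := sliceMoment_one_rpow_le (fun _ => hα) hQ hp hpq
  have hr₀_nonneg : 0 ≤ r₀ := hr₀ ▸ Real.sqrt_nonneg _
  simp only [eval_snoc_mul_of_isHomogeneous hQ, norm_mul, norm_pow, Complex.norm_real,
    Real.norm_of_nonneg hr₀_nonneg, Real.mul_rpow (pow_nonneg hr₀_nonneg m) (norm_nonneg _),
    integral_const_mul, intervalIntegral.integral_const_mul, mul_left_comm _ ((r₀ ^ m) ^ q), hmean]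
  refine ⟨?_, hle⟩
  calc ((r₀ ^ m) ^ q * sliceMoment (fun _ => α) q Q 1) ^ (1 / q)
      = r₀ ^ m * sliceMoment (fun _ => α) q Q 1 ^ (1 / q) := by
        rw [Real.mul_rpow (by positivity) (sliceMoment_nonneg ..), one_div,
          Real.rpow_rpow_inv (by positivity) hq.ne']
    _ ≤ r₀ ^ m * ((q / p) ^ ((m : ℝ) / 2) * sliceMoment (fun _ => α) p Q 1 ^ (1 / p)) := by gcongr
    _ = sliceMoment (fun _ => α) p Q 1 ^ (1 / p) := by
        rw [← mul_assoc, hr₀, sqrt_div_pow_mul_div_rpow hp hq, one_mul]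

/-- Mixed-norm hypercontractive estimate for `m`-homogeneous polynomials `Q(𝐳, w)`:
with `r₀ = √(p/q)`,
`‖Q(r₀·, r₀·)‖_{A_α^q(𝔻ⁿ,𝐳) × H^q(𝕋,w)} ≤ ‖Q‖_{A_α^p(𝔻ⁿ,𝐳) × H^p(𝕋,w)}`, and,
equivalently by homogeneity,
`‖Q‖_{A_α^q(𝔻ⁿ,𝐳) × H^q(𝕋,w)} ≤ (q/p)^{m/2} ‖Q‖_{A_α^p(𝔻ⁿ,𝐳) × H^p(𝕋,w)}`.
The circle `𝕋` carries the normalized arc-length measure. -/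
theorem mixed_norm_hypercontractive
    (n m : ℕ) (hn : 0 < n) (hm : 0 < m)
    (α p q : ℝ) (hα : 1 < α) (hp : 0 < p) (hpq : p ≤ q) (hq2 : 2 ≤ q)
    (r₀ : ℝ) (hr₀ : r₀ = Real.sqrt (p / q))
    (Q : MvPolynomial (Fin (n + 1)) ℂ) (hQ : Q.IsHomogeneous m) :
    (((2 * Real.pi)⁻¹ *
        ∫ θ in (0 : ℝ)..(2 * Real.pi),
          ∫ z, ‖MvPolynomial.eval
              (Fin.snoc (fun i => (r₀ : ℂ) * z i) ((r₀ : ℂ) * Complex.exp (θ * Complex.I))) Q‖ ^ q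
            ∂(bergmanMeasurePi n α)) ^ (1 / q) ≤
      ((2 * Real.pi)⁻¹ *
        ∫ θ in (0 : ℝ)..(2 * Real.pi),
          ∫ z, ‖MvPolynomial.eval
              (Fin.snoc z (Complex.exp (θ * Complex.I))) Q‖ ^ p
            ∂(bergmanMeasurePi n α)) ^ (1 / p)) ∧
    ((2 * Real.pi)⁻¹ *
        ∫ θ in (0 : ℝ)..(2 * Real.pi),
          ∫ z, ‖MvPolynomial.eval
              (Fin.snoc z (Complex.exp (θ * Complex.I))) Q‖ ^ q
            ∂(bergmanMeasurePi n α)) ^ (1 / q) ≤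
      (q / p) ^ ((m : ℝ) / 2) *
        ((2 * Real.pi)⁻¹ *
          ∫ θ in (0 : ℝ)..(2 * Real.pi),
            ∫ z, ‖MvPolynomial.eval
                (Fin.snoc z (Complex.exp (θ * Complex.I))) Q‖ ^ p
              ∂(bergmanMeasurePi n α)) ^ (1 / p) := by
  exact mixed_norm_hypercontractive_general n m α p q hα hp hpq r₀ hr₀ Q hQ
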